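/- Fix an integer k ≥ 4 and a constant C > 0. For every ε > 0 there is a constant C_ε such that for every integer N ≥ 1, the number of 6-tuples (n₁, …, n₆) of integers with N ≤ n_i ≤ 2N for all i, satisfying n₁² + n₂² + n₃² = n₄² + n₅² + n₆² and |n₁^k + n₂^k + n₃^k − n₄^k − n₅^k − n₆^k| ≤ C·N^{k-1}, is at most C_ε · N^{3+ε}. -/

import Mathlib

open MeasureTheory Real

noncomputable section

/-!
Dividing the `k`-th powers by `N ^ (k - 1)` and rounding turns the system into
`∑ v (xᵢ) - ∑ v (yᵢ) ∈ H`, where `v n = (n², ⌊n ^ k / N ^ (k - 1)⌋)` and `H` is a bounded set. By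
Cauchy–Schwarz no value of the difference is taken more often than `0`, so it is enough to count the
solutions of `∑ v (xᵢ) = ∑ v (yᵢ)`, that is, to bound a sixth moment of exponential sums over the
points `v n`; these may be taken over the characters of a finite group into which `v` embeds.

Cut an arc of length `L` into `Q` pieces. The contribution of pairs of neighbouring pieces is the
desired bound at scale `L / Q`. For a pair of separated pieces the curvature of `v` is exploited by
convexity of `u ↦ u ^ (k / 2)`: when the second arc is short, the translates by different subarcs of
the first are almost orthogonal, and repeated use of this with Cauchy–Schwarz, exchanging the roles
of the two arcs, gains as large a constant factor as needed. Iterating over scales leaves arcs of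
length `O(√N)`. There the equation between squares alone forces `∑ xᵢ - ∑ yᵢ = O(1)`, and the
solutions of `∑ xᵢ = ∑ yᵢ`, `∑ xᵢ² = ∑ yᵢ²` are counted by the divisor bound.
-/

section SeparatedPairs

open Finset

lemma card_filter_dist_le (m H i : ℕ) : #{j ∈ range m | Nat.dist i j ≤ H} ≤ 2 * H + 1 := by
  calc #{j ∈ range m | Nat.dist i j ≤ H} ≤ #(Icc (i - H) (i + H)) := by
        refine card_le_card fun j hj => ?_
        obtain ⟨-, hj⟩ := mem_filter.1 hj
        simp only [mem_Icc, Nat.dist] at hj ⊢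
        lia
    _ ≤ 2 * H + 1 := by
        rw [Nat.card_Icc]
        lia

lemma sum_le_mul_of_far_le_div {Q H s : ℕ} (hQ : 0 < Q) {u : ℕ → ℝ} (hu : 0 ≤ u s)
    (hmax : ∀ j ∈ range Q, u j ≤ u s)
    (hfar : ∀ j ∈ range Q, H < Nat.dist s j → u j ≤ u s / Q) :
    ∑ j ∈ range Q, u j ≤ (2 * H + 2) * u s := by
  have near : ∑ j ∈ range Q with Nat.dist s j ≤ H, u j ≤ (2 * H + 1) * u s := by
    calc ∑ j ∈ range Q with Nat.dist s j ≤ H, u j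
        ≤ #{j ∈ range Q | Nat.dist s j ≤ H} • u s :=
          sum_le_card_nsmul _ _ _ fun j hj => hmax j (mem_filter.1 hj).1
      _ ≤ (2 * H + 1) * u s := by
          rw [nsmul_eq_mul]
          gcongr
          exact_mod_cast card_filter_dist_le Q H s
  have far : ∑ j ∈ range Q with ¬Nat.dist s j ≤ H, u j ≤ u s := by
    calc ∑ j ∈ range Q with ¬Nat.dist s j ≤ H, u j
        ≤ #{j ∈ range Q | ¬Nat.dist s j ≤ H} • (u s / Q) :=
          sum_le_card_nsmul _ _ _ fun j hj =>
            hfar j (mem_filter.1 hj).1 (not_le.1 (mem_filter.1 hj).2)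
      _ ≤ Q * (u s / Q) := by
          rw [nsmul_eq_mul]
          gcongr
          exact (card_filter_le _ _).trans_eq (card_range Q)
      _ = u s := by field_simp
  rw [← sum_filter_add_sum_filter_not _ fun j => Nat.dist s j ≤ H]
  linarith

/- If some term far from the largest one is within a factor `Q` of it, that single pair controls
the whole sum; otherwise only the `2 H + 1` terms near the largest one matter. -/
lemma sum_pow_add_le_sum_pow_add_sum_far {Q : ℕ} (hQ : 0 < Q) (H p q : ℕ) {u : ℕ → ℝ}
    (hu : ∀ j, 0 ≤ u j) :
    (∑ j ∈ range Q, u j) ^ (p + q) ≤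
      (2 * H + 2) ^ (p + q) * ∑ j ∈ range Q, u j ^ (p + q) +
        (Q : ℝ) ^ (2 * p + q) *
          ∑ i ∈ range Q, ∑ j ∈ range Q with H < Nat.dist i j, u i ^ p * u j ^ q := by
  obtain ⟨s, hs, hmax⟩ := exists_max_image (range Q) u ⟨0, mem_range.2 hQ⟩
  have hterm (i j) : 0 ≤ u i ^ p * u j ^ q := mul_nonneg (pow_nonneg (hu i) p) (pow_nonneg (hu j) q)
  have hdiag : 0 ≤ ∑ j ∈ range Q, u j ^ (p + q) := sum_nonneg fun j _ => pow_nonneg (hu j) _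
  have hsum : 0 ≤ ∑ j ∈ range Q, u j := sum_nonneg fun j _ => hu j
  by_cases broad : ∃ i ∈ range Q, H < Nat.dist s i ∧ u s / Q < u i
  · obtain ⟨i, hi, hfar, hlt⟩ := broad
    have hsi : u s ≤ Q * u i := ((div_lt_iff₀' (by positivity)).1 hlt).le
    have hus := hu s
    have single : u i ^ p * u s ^ q ≤
        ∑ i ∈ range Q, ∑ j ∈ range Q with H < Nat.dist i j, u i ^ p * u j ^ q :=
      (single_le_sum (f := fun j => u i ^ p * u j ^ q) (fun j _ => hterm i j)
        (mem_filter.2 ⟨hs, Nat.dist_comm s i ▸ hfar⟩)).trans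
      (single_le_sum (f := fun i => ∑ j ∈ range Q with H < Nat.dist i j, u i ^ p * u j ^ q)
        (fun i _ => sum_nonneg fun j _ => hterm i j) hi)
    calc (∑ j ∈ range Q, u j) ^ (p + q) ≤ (Q * u s) ^ (p + q) := by
          gcongr
          simpa using sum_le_card_nsmul _ _ _ hmax
      _ = Q ^ (p + q) * u s ^ q * u s ^ p := by ring
      _ ≤ Q ^ (p + q) * u s ^ q * (Q * u i) ^ p := by gcongr
      _ = Q ^ (2 * p + q) * (u i ^ p * u s ^ q) := by ring
      _ ≤ _ := (mul_le_mul_of_nonneg_left single (by positivity)).trans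
          (le_add_of_nonneg_left (by positivity))
  · push Not at broad
    calc (∑ j ∈ range Q, u j) ^ (p + q) ≤ ((2 * H + 2) * u s) ^ (p + q) := by
          gcongr
          exact sum_le_mul_of_far_le_div hQ (hu s) hmax broad
      _ = (2 * H + 2) ^ (p + q) * u s ^ (p + q) := mul_pow ..
      _ ≤ (2 * H + 2) ^ (p + q) * ∑ j ∈ range Q, u j ^ (p + q) := by
          gcongr
          exact single_le_sum (f := fun j => u j ^ (p + q)) (fun j _ => pow_nonneg (hu j) _) hs
      _ ≤ _ := le_add_of_nonneg_right <| mul_nonneg (by positivity) <|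
          sum_nonneg fun i _ => sum_nonneg fun j _ => hterm i j

open Classical in
lemma norm_sum_sq_le_of_card_inner_ne_zero_le {𝕜 E ι : Type*} [RCLike 𝕜]
    [SeminormedAddCommGroup E] [InnerProductSpace 𝕜 E] (s : Finset ι) (f : ι → E) {d : ℕ}
    (hd : ∀ i ∈ s, #{j ∈ s | inner 𝕜 (f i) (f j) ≠ 0} ≤ d) :
    ‖∑ i ∈ s, f i‖ ^ 2 ≤ d * ∑ i ∈ s, ‖f i‖ ^ 2 := by
  have amgm (i j : ι) : RCLike.re (inner 𝕜 (f i) (f j)) ≤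
      if inner 𝕜 (f i) (f j) ≠ 0 then (‖f i‖ ^ 2 + ‖f j‖ ^ 2) / 2 else 0 := by
    split_ifs with h
    · linarith [re_inner_le_norm (𝕜 := 𝕜) (f i) (f j), two_mul_le_add_sq ‖f i‖ ‖f j‖]
    · simp [not_not.1 h]
  have symm : ∑ i ∈ s, ∑ j ∈ s, (if inner 𝕜 (f i) (f j) ≠ 0 then ‖f j‖ ^ 2 else 0) =
      ∑ i ∈ s, ∑ j ∈ s, (if inner 𝕜 (f i) (f j) ≠ 0 then ‖f i‖ ^ 2 else 0) := by
    rw [sum_comm]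
    simp only [ne_eq, inner_eq_zero_symm]
  calc ‖∑ i ∈ s, f i‖ ^ 2 = ∑ i ∈ s, ∑ j ∈ s, RCLike.re (inner 𝕜 (f i) (f j)) := by
        rw [← inner_self_eq_norm_sq (𝕜 := 𝕜)]
        simp only [sum_inner, inner_sum, map_sum]
        exact sum_comm
    _ ≤ ∑ i ∈ s, ∑ j ∈ s,
          if inner 𝕜 (f i) (f j) ≠ 0 then (‖f i‖ ^ 2 + ‖f j‖ ^ 2) / 2 else 0 :=
        sum_le_sum fun i _ => sum_le_sum fun j _ => amgm i j
    _ = (∑ i ∈ s, ∑ j ∈ s, (if inner 𝕜 (f i) (f j) ≠ 0 then ‖f i‖ ^ 2 else 0) +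
          ∑ i ∈ s, ∑ j ∈ s, if inner 𝕜 (f i) (f j) ≠ 0 then ‖f j‖ ^ 2 else 0) / 2 := by
        simp only [← sum_add_distrib, sum_div]
        refine sum_congr rfl fun i _ => sum_congr rfl fun j _ => ?_
        split_ifs <;> simp
    _ = ∑ i ∈ s, #{j ∈ s | inner 𝕜 (f i) (f j) ≠ 0} * ‖f i‖ ^ 2 := by
        rw [symm, add_self_div_two]
        simp only [← sum_filter, sum_const, nsmul_eq_mul]
    _ ≤ d * ∑ i ∈ s, ‖f i‖ ^ 2 := by
        rw [mul_sum]
        gcongr with i hi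
        exact hd i hi

end SeparatedPairs

section ExponentialSums

open Finset ComplexConjugate

variable {ι κ G : Type*} [AddCommGroup G]

/-- The exponential sum with frequencies `v n`, `n ∈ A`, as a function on the dual group. -/
def expSum (v : ι → G) (A : Finset ι) (ψ : AddChar G ℂ) : ℂ := ∑ n ∈ A, ψ (v n)

lemma expSum_biUnion [DecidableEq ι] (v : ι → G) {s : Finset κ} {A : κ → Finset ι}
    (hA : (s : Set κ).PairwiseDisjoint A) (ψ : AddChar G ℂ) :
    expSum v (s.biUnion A) ψ = ∑ j ∈ s, expSum v (A j) ψ :=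
  sum_biUnion hA

lemma expSum_mul (v : ι → G) (w : κ → G) (A : Finset ι) (B : Finset κ) (ψ : AddChar G ℂ) :
    expSum v A ψ * expSum w B ψ = expSum (fun p : ι × κ => v p.1 + w p.2) (A ×ˢ B) ψ := by
  simp only [expSum, sum_mul_sum, ← sum_product', AddChar.map_add_eq_mul]

lemma expSum_pow (v : ι → G) (A : Finset ι) (s : ℕ) (ψ : AddChar G ℂ) :
    expSum v A ψ ^ s =
      expSum (fun x : Fin s → ι => ∑ i, v (x i)) (Fintype.piFinset fun _ => A) ψ := by
  rw [expSum, sum_pow', expSum]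
  exact sum_congr rfl fun x _ =>
    (map_prod ψ.toMonoidHom (fun i => Multiplicative.ofAdd (v (x i))) univ).symm

variable [Finite G]

lemma sum_expSum_mul_conj [DecidableEq G] (v : ι → G) (w : κ → G) (A : Finset ι) (B : Finset κ) :
    ∑ ψ : AddChar G ℂ, expSum v A ψ * conj (expSum w B ψ) =
      Nat.card G * #{p ∈ A ×ˢ B | v p.1 = w p.2} := by
  cases nonempty_fintype G
  calc ∑ ψ : AddChar G ℂ, expSum v A ψ * conj (expSum w B ψ)
      = ∑ ψ : AddChar G ℂ, ∑ p ∈ A ×ˢ B, ψ (v p.1 - w p.2) := by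
        simp only [expSum, map_sum, sum_mul_sum, ← sum_product', AddChar.map_sub_eq_div,
          ← AddChar.map_neg_eq_conj, AddChar.map_neg_eq_inv, div_eq_mul_inv]
    _ = ∑ p ∈ A ×ˢ B, if v p.1 = w p.2 then (Nat.card G : ℂ) else 0 := by
        rw [sum_comm]
        simp only [AddChar.sum_apply_eq_ite, sub_eq_zero, Nat.card_eq_fintype_card]
    _ = Nat.card G * #{p ∈ A ×ˢ B | v p.1 = w p.2} := by
        rw [← sum_filter, sum_const, nsmul_eq_mul, mul_comm]

/-- The mean value `∑_ψ |F_A(ψ)|² |F_B(ψ)|⁴`, where `F` denotes `expSum v`. -/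
def mixedMoment (v : ι → G) (A B : Finset ι) : ℝ :=
  ∑ ψ : AddChar G ℂ, ‖expSum v A ψ‖ ^ 2 * ‖expSum v B ψ‖ ^ 4

/-- The sixth moment `∑_ψ |F_A(ψ)|⁶`, where `F` denotes `expSum v`. -/
def sixthMoment (v : ι → G) (A : Finset ι) : ℝ :=
  ∑ ψ : AddChar G ℂ, ‖expSum v A ψ‖ ^ 6

lemma sixthMoment_nonneg (v : ι → G) (A : Finset ι) : 0 ≤ sixthMoment v A :=
  sum_nonneg fun _ _ => by positivity

lemma mixedMoment_sq_le (v : ι → G) (A B : Finset ι) :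
    mixedMoment v A B ^ 2 ≤ mixedMoment v B A * sixthMoment v B := by
  calc mixedMoment v A B ^ 2
      = (∑ ψ : AddChar G ℂ,
          ‖expSum v A ψ‖ ^ 2 * ‖expSum v B ψ‖ * ‖expSum v B ψ‖ ^ 3) ^ 2 := by
        simp only [mixedMoment, mul_assoc, ← pow_succ']
    _ ≤ (∑ ψ : AddChar G ℂ, (‖expSum v A ψ‖ ^ 2 * ‖expSum v B ψ‖) ^ 2) *
          ∑ ψ : AddChar G ℂ, (‖expSum v B ψ‖ ^ 3) ^ 2 :=
        sum_mul_sq_le_sq_mul_sq ..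
    _ = mixedMoment v B A * sixthMoment v B := by
        congr 1 <;> exact sum_congr rfl fun ψ _ => by ring

lemma mul_sq_le_weighted_cubes {x y : ℝ} (hx : 0 ≤ x) (hy : 0 ≤ y) :
    x * y ^ 2 ≤ (x ^ 3 + 2 * y ^ 3) / 3 := by
  nlinarith [mul_nonneg (by positivity : 0 ≤ x + 2 * y) (sq_nonneg (x - y))]

lemma mixedMoment_le_of_sixthMoment_le (v : ι → G) {A B : Finset ι} {K x y : ℝ} (hx : 0 < x)
    (hy : 0 < y) (hA : sixthMoment v A ≤ K * x ^ 3) (hB : sixthMoment v B ≤ K * y ^ 3) :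
    mixedMoment v A B ≤ K * x * y ^ 2 := by
  have young (ψ : AddChar G ℂ) : ‖expSum v A ψ‖ ^ 2 * ‖expSum v B ψ‖ ^ 4 ≤
      x * y ^ 2 * ((‖expSum v A ψ‖ ^ 6 / x ^ 3 + 2 * (‖expSum v B ψ‖ ^ 6 / y ^ 3)) / 3) := by
    calc ‖expSum v A ψ‖ ^ 2 * ‖expSum v B ψ‖ ^ 4
        = x * y ^ 2 * (‖expSum v A ψ‖ ^ 2 / x * (‖expSum v B ψ‖ ^ 2 / y) ^ 2) := by field_simp
      _ ≤ x * y ^ 2 *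
            (((‖expSum v A ψ‖ ^ 2 / x) ^ 3 + 2 * (‖expSum v B ψ‖ ^ 2 / y) ^ 3) / 3) := by
          gcongr
          exact mul_sq_le_weighted_cubes (by positivity) (by positivity)
      _ = _ := by
          rw [div_pow, div_pow]
          ring
  calc mixedMoment v A B
      ≤ ∑ ψ : AddChar G ℂ, x * y ^ 2 *
          ((‖expSum v A ψ‖ ^ 6 / x ^ 3 + 2 * (‖expSum v B ψ‖ ^ 6 / y ^ 3)) / 3) :=
        sum_le_sum fun ψ _ => young ψ
    _ = x * y ^ 2 * ((sixthMoment v A / x ^ 3 + 2 * (sixthMoment v B / y ^ 3)) / 3) := by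
        simp only [sixthMoment, ← mul_sum, ← sum_div, sum_add_distrib]
    _ ≤ x * y ^ 2 * ((K + 2 * K) / 3) := by
        gcongr
        · rwa [div_le_iff₀ (by positivity)]
        · rwa [div_le_iff₀ (by positivity)]
    _ = K * x * y ^ 2 := by ring

lemma sum_expSum_mul_sq_mul_conj_eq_zero (v : ι → G) {A A' B : Finset ι}
    (h : ∀ n ∈ A, ∀ n' ∈ A', ∀ m₁ ∈ B, ∀ m₂ ∈ B, ∀ m₁' ∈ B, ∀ m₂' ∈ B,
      v n + (v m₁ + v m₂) ≠ v n' + (v m₁' + v m₂')) :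
    ∑ ψ : AddChar G ℂ,
      expSum v A ψ * expSum v B ψ ^ 2 * conj (expSum v A' ψ * expSum v B ψ ^ 2) = 0 := by
  classical
  simp only [sq, expSum_mul, sum_expSum_mul_conj]
  rw [filter_false_of_mem, card_empty, Nat.cast_zero, mul_zero]
  rintro ⟨⟨n, m₁, m₂⟩, n', m₁', m₂'⟩ hp
  simp only [mem_product] at hp
  obtain ⟨⟨hn, hm₁, hm₂⟩, hn', hm₁', hm₂'⟩ := hp
  exact h n hn n' hn' m₁ hm₁ m₂ hm₂ m₁' hm₁' m₂' hm₂'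

lemma mixedMoment_biUnion_le [DecidableEq ι] (v : ι → G) {s : Finset κ} {A : κ → Finset ι}
    (B : Finset ι) (hA : (s : Set κ).PairwiseDisjoint A) (r : κ → κ → Prop) [DecidableRel r]
    {d : ℕ} (hd : ∀ i ∈ s, #{j ∈ s | r i j} ≤ d)
    (hr : ∀ i ∈ s, ∀ j ∈ s, ¬r i j → ∀ n ∈ A i, ∀ n' ∈ A j,
      ∀ m₁ ∈ B, ∀ m₂ ∈ B, ∀ m₁' ∈ B, ∀ m₂' ∈ B,
        v n + (v m₁ + v m₂) ≠ v n' + (v m₁' + v m₂')) :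
    mixedMoment v (s.biUnion A) B ≤ d * ∑ j ∈ s, mixedMoment v (A j) B := by
  classical
  let f (A : Finset ι) : EuclideanSpace ℂ (AddChar G ℂ) :=
    WithLp.toLp 2 fun ψ => expSum v A ψ * expSum v B ψ ^ 2
  have norm_f (A : Finset ι) : ‖f A‖ ^ 2 = mixedMoment v A B := by
    rw [EuclideanSpace.norm_sq_eq]
    exact sum_congr rfl fun ψ _ => by
      simp only [f, norm_mul, norm_pow]
      ring
  have f_biUnion : f (s.biUnion A) = ∑ j ∈ s, f (A j) := by
    ext ψ
    simp only [f, expSum_biUnion v hA, sum_mul, WithLp.ofLp_sum, Finset.sum_apply]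
  have orthogonal : ∀ i ∈ s, ∀ j ∈ s, ¬r i j → inner ℂ (f (A j)) (f (A i)) = 0 :=
    fun i hi j hj hij => by
      simpa only [PiLp.inner_apply, RCLike.inner_apply] using
        sum_expSum_mul_sq_mul_conj_eq_zero v (hr i hi j hj hij)
  simp only [← norm_f]
  rw [f_biUnion]
  refine norm_sum_sq_le_of_card_inner_ne_zero_le (𝕜 := ℂ) s _ fun i hi =>
    (card_le_card fun j hj => ?_).trans (hd i hi)
  rw [mem_filter] at hj ⊢
  exact ⟨hj.1, by_contra fun hij => hj.2 (inner_eq_zero_symm.1 (orthogonal i hi j hj.1 hij))⟩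

end ExponentialSums

section HigherEnergy

open Finset

variable {ι G : Type*} [AddCommGroup G] [DecidableEq G]

/-- The number of solutions of `v x₁ + ⋯ + v xₛ = v y₁ + ⋯ + v yₛ` with all `xᵢ, yᵢ ∈ A`. -/
def higherEnergy (s : ℕ) (v : ι → G) (A : Finset ι) : ℕ :=
  #{p ∈ (Fintype.piFinset fun _ : Fin s => A) ×ˢ (Fintype.piFinset fun _ : Fin s => A) |
    ∑ i, v (p.1 i) = ∑ i, v (p.2 i)}

lemma sum_norm_expSum_pow_two_mul [Finite G] (s : ℕ) (v : ι → G) (A : Finset ι) :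
    ∑ ψ : AddChar G ℂ, ‖expSum v A ψ‖ ^ (2 * s) = Nat.card G * higherEnergy s v A := by
  have h := sum_expSum_mul_conj (fun x : Fin s → ι => ∑ i, v (x i))
    (fun x : Fin s → ι => ∑ i, v (x i)) (Fintype.piFinset fun _ => A) (Fintype.piFinset fun _ => A)
  simp only [← expSum_pow, Complex.mul_conj', norm_pow] at h
  simp only [pow_mul', higherEnergy]
  exact_mod_cast h

end HigherEnergy

section Arcs

open Finset

/-- The integers of `S` in the half-open interval `[a, a + l)`. -/
def arc (S : Finset ℤ) (a l : ℝ) : Finset ℤ := {n ∈ S | a ≤ (n : ℝ) ∧ (n : ℝ) < a + l}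

lemma mem_arc {S : Finset ℤ} {a l : ℝ} {n : ℤ} : n ∈ arc S a l ↔ n ∈ S ∧ a ≤ n ∧ n < a + l :=
  mem_filter

lemma biUnion_arc (S : Finset ℤ) (a : ℝ) {w : ℝ} (hw : 0 < w) (m : ℕ) :
    (range m).biUnion (fun j => arc S (a + j * w) w) = arc S a (m * w) := by
  ext n
  simp only [mem_biUnion, mem_range, mem_arc]
  constructor
  · rintro ⟨j, hj, hn, hl, hr⟩
    have : (j + 1 : ℝ) * w ≤ m * w := by
      gcongr
      exact_mod_cast hj
    exact ⟨hn, by linarith [show 0 ≤ j * w by positivity], by linarith⟩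
  · rintro ⟨hn, hl, hr⟩
    have h0 : 0 ≤ (n - a) / w := div_nonneg (by linarith) hw.le
    have hfloor : ⌊(n - a) / w⌋₊ * w ≤ n - a := (le_div_iff₀ hw).1 (Nat.floor_le h0)
    have hceil : n - a < (⌊(n - a) / w⌋₊ + 1) * w := (div_lt_iff₀ hw).1 (Nat.lt_floor_add_one _)
    refine ⟨⌊(n - a) / w⌋₊, (Nat.floor_lt h0).2 ?_, hn, by linarith, by linarith⟩
    rw [div_lt_iff₀ hw]
    linarith

lemma lt_abs_sub_of_mem_arc {S : Finset ℤ} {a w : ℝ} (hw : 0 ≤ w) {i j : ℕ}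
    (hij : 1 < Nat.dist i j) {n n' : ℤ} (hn : n ∈ arc S (a + i * w) w)
    (hn' : n' ∈ arc S (a + j * w) w) : w < |(n - n' : ℝ)| := by
  rw [mem_arc] at hn hn'
  rw [lt_abs]
  rcases (show i + 2 ≤ j ∨ j + 2 ≤ i by unfold Nat.dist at hij; lia) with h | h
  · have : (i + 2 : ℝ) * w ≤ j * w := by
      gcongr
      exact_mod_cast h
    exact Or.inr (by linarith [hn.2.2, hn'.2.1])
  · have : (j + 2 : ℝ) * w ≤ i * w := by
      gcongr
      exact_mod_cast h
    exact Or.inl (by linarith [hn'.2.2, hn.2.1])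

lemma pairwiseDisjoint_arc (S : Finset ℤ) (a w : ℝ) (s : Set ℕ) :
    s.PairwiseDisjoint fun j : ℕ => arc S (a + j * w) w := by
  refine fun i _ j _ hij => disjoint_left.2 fun n hi hj => hij ?_
  simp only [mem_arc] at hi hj
  have hw : 0 < w := by linarith
  have hlt {p q : ℕ} (h : a + p * w < a + q * w + w) : p < q + 1 := by
    have : (p : ℝ) * w < (q + 1) * w := by linarith
    exact_mod_cast lt_of_mul_lt_mul_right this hw.le
  have := hlt (hi.2.1.trans_lt hj.2.2)
  have := hlt (hj.2.1.trans_lt hi.2.2)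
  lia

end Arcs

section BilinearIteration

open Finset

variable {G : Type*} [AddCommGroup G]

/-- Quantitative transversality of `v` on `S`: if `v n + v m₁ + v m₂ = v n' + v m₁' + v m₂'`, where
the `m`'s lie in an arc of length `l ≥ R` and `n`, `n'` lie on the same side of that arc at distance
at least `D` from it, then `|n - n'| ≤ C * l ^ 2 / D`. -/
def Transversal (v : ℤ → G) (S : Finset ℤ) (R C : ℝ) : Prop :=
  ∀ a l D : ℝ, R ≤ l → 0 < D → ∀ n ∈ S, ∀ n' ∈ S,
    ((a + l + D ≤ n ∧ a + l + D ≤ n') ∨ (n + D ≤ a ∧ n' + D ≤ a)) →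
    ∀ m₁ ∈ arc S a l, ∀ m₂ ∈ arc S a l, ∀ m₁' ∈ arc S a l, ∀ m₂' ∈ arc S a l,
      v n + (v m₁ + v m₂) = v n' + (v m₁' + v m₂') → |(n - n' : ℝ)| * D ≤ C * l ^ 2

variable [Finite G]

/-- The sixth moment over every arc of length `l ∈ [R, L]` is at most `A * l ^ (3 + η)`. -/
def SixthMomentBound (v : ℤ → G) (S : Finset ℤ) (A η R L : ℝ) : Prop :=
  ∀ a l : ℝ, R ≤ l → l ≤ L → sixthMoment v (arc S a l) ≤ A * l ^ η * l ^ 3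

variable {v : ℤ → G} {S : Finset ℤ} {R C : ℝ}

lemma Transversal.mixedMoment_arc_le_sum (hT : Transversal v S R C) {a b w l D : ℝ} {m : ℕ}
    (hw : 0 < w) (hl : R ≤ l) (hD : 0 < D) (hsep : b + l + D ≤ a ∨ a + m * w + D ≤ b)
    (hwD : C * l ^ 2 ≤ w * D) :
    mixedMoment v (arc S a (m * w)) (arc S b l) ≤
      3 * ∑ j ∈ range m, mixedMoment v (arc S (a + j * w) w) (arc S b l) := by
  have hsub {j : ℕ} (hj : j ∈ range m) : arc S (a + j * w) w ⊆ arc S a (m * w) :=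
    biUnion_arc S a hw m ▸ subset_biUnion_of_mem (fun j : ℕ => arc S (a + j * w) w) hj
  rw [← biUnion_arc S a hw m]
  refine mixedMoment_biUnion_le v _ (pairwiseDisjoint_arc S a w _) (fun i j => Nat.dist i j ≤ 1)
    (fun i _ => card_filter_dist_le m 1 i) fun i hi j hj hij n hn n' hn' m₁ hm₁ m₂ hm₂ m₁' hm₁'
      m₂' hm₂' heq => ?_
  have hfar := lt_abs_sub_of_mem_arc hw.le (not_le.1 hij) hn hn'
  obtain ⟨hnS, hna, hnm⟩ := mem_arc.1 (hsub hi hn)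
  obtain ⟨hnS', hna', hnm'⟩ := mem_arc.1 (hsub hj hn')
  have hside : (b + l + D ≤ n ∧ b + l + D ≤ n') ∨ (n + D ≤ b ∧ n' + D ≤ b) :=
    hsep.imp (fun h => ⟨h.trans hna, h.trans hna'⟩) fun h => ⟨by linarith, by linarith⟩
  have hnear := hT b l D hl hD n hnS n' hnS' hside m₁ hm₁ m₂ hm₂ m₁' hm₁' m₂' hm₂' heq
  exact (hnear.trans hwD).not_gt (mul_lt_mul_of_pos_right hfar hD)

lemma Transversal.mixedMoment_arc_le_of_swap (hT : Transversal v S R C)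
    {a b l₁ l₂ w D K V M : ℝ} {m : ℕ} (hw : 0 < w) (hmw : m * w = l₁) (hl₂ : R ≤ l₂) (hD : 0 < D)
    (hsep : b + l₂ + D ≤ a ∨ a + l₁ + D ≤ b) (hwD : C * l₂ ^ 2 ≤ w * D) (hM : 0 ≤ M)
    (hKV : K * V ≤ M ^ 2) (hV : sixthMoment v (arc S b l₂) ≤ V * l₂ ^ 3)
    (hswap : ∀ j ∈ range m,
      mixedMoment v (arc S b l₂) (arc S (a + j * w) w) ≤ K * l₂ * w ^ 2) :
    mixedMoment v (arc S a l₁) (arc S b l₂) ≤ 3 * M * l₁ * l₂ ^ 2 := by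
  subst hmw
  have piece : ∀ j ∈ range m,
      mixedMoment v (arc S (a + j * w) w) (arc S b l₂) ≤ M * w * l₂ ^ 2 := fun j hj => by
    refine le_of_sq_le_sq ?_ (by positivity)
    calc mixedMoment v (arc S (a + j * w) w) (arc S b l₂) ^ 2
        ≤ mixedMoment v (arc S b l₂) (arc S (a + j * w) w) * sixthMoment v (arc S b l₂) :=
          mixedMoment_sq_le ..
      _ ≤ K * l₂ * w ^ 2 * (V * l₂ ^ 3) :=
          mul_le_mul (hswap j hj) hV (sixthMoment_nonneg ..)
            ((sum_nonneg fun _ _ => by positivity).trans (hswap j hj))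
      _ = K * V * (w * l₂ ^ 2) ^ 2 := by ring
      _ ≤ M ^ 2 * (w * l₂ ^ 2) ^ 2 := by gcongr
      _ = (M * w * l₂ ^ 2) ^ 2 := by ring
  calc mixedMoment v (arc S a (m * w)) (arc S b l₂)
      ≤ 3 * ∑ j ∈ range m, mixedMoment v (arc S (a + j * w) w) (arc S b l₂) :=
        hT.mixedMoment_arc_le_sum hw hl₂ hD hsep hwD
    _ ≤ 3 * ∑ _j ∈ range m, M * w * l₂ ^ 2 := by
        gcongr with j hj
        exact piece j hj
    _ = 3 * M * (m * w) * l₂ ^ 2 := by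
        rw [sum_const, card_range, nsmul_eq_mul]
        ring

lemma exists_nat_mul_eq {x l : ℝ} (hx : 0 < x) (hxl : x ≤ l) :
    ∃ (m : ℕ) (w : ℝ), m * w = l ∧ x ≤ w ∧ w ≤ 2 * x := by
  have hl : 0 < l := hx.trans_le hxl
  have hm : 1 ≤ ⌊l / x⌋₊ := Nat.le_floor (by rwa [Nat.cast_one, one_le_div hx])
  have hm' : (1 : ℝ) ≤ ⌊l / x⌋₊ := by exact_mod_cast hm
  refine ⟨⌊l / x⌋₊, l / ⌊l / x⌋₊, by field_simp, ?_, ?_⟩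
  · rw [le_div_iff₀' (by positivity), ← le_div_iff₀ hx]
    exact Nat.floor_le (by positivity)
  · rw [div_le_iff₀ (by positivity)]
    have := (div_lt_iff₀ hx).1 (Nat.lt_floor_add_one (l / x))
    nlinarith

lemma exists_critical_subdivision {Λ l₁ l₂ : ℝ} (hl₂ : 0 < l₂) (hl₂Λ : l₂ ≤ Λ / 2)
    (hsq : l₂ ^ 2 ≤ 2 * Λ * l₁) :
    ∃ (m : ℕ) (w : ℝ), m * w = l₁ ∧ 0 < w ∧ w ≤ l₂ / 2 ∧
      l₂ ^ 2 / (2 * Λ) ≤ w ∧ w ≤ l₂ ^ 2 / Λ := by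
  have hΛ : 0 < Λ := by linarith
  obtain ⟨m, w, hmw, hwl, hwu⟩ := exists_nat_mul_eq (x := l₂ ^ 2 / (2 * Λ)) (by positivity)
    ((div_le_iff₀' (by positivity)).2 hsq)
  have hwu' : w ≤ l₂ ^ 2 / Λ := hwu.trans_eq (by field_simp)
  refine ⟨m, w, hmw, lt_of_lt_of_le (by positivity) hwl, hwu'.trans ?_, hwl, hwu'⟩
  rw [div_le_iff₀ hΛ]
  nlinarith

lemma rpow_half_div_le {w l Λ η : ℝ} (hw : 0 ≤ w) (hl : 0 ≤ l) (hΛ : 0 < Λ) (hη : 0 ≤ η)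
    (h : w ≤ l ^ 2 / Λ) : (w / Λ) ^ (η / 2) ≤ ((l / Λ) ^ (η / 2)) ^ 2 := by
  calc (w / Λ) ^ (η / 2) ≤ (l ^ 2 / Λ / Λ) ^ (η / 2) := by gcongr
    _ = ((l / Λ) ^ 2) ^ (η / 2) := by rw [div_pow, div_div, ← sq]
    _ = ((l / Λ) ^ (η / 2)) ^ 2 := (Real.rpow_pow_comm (by positivity) ..).symm

lemma rpow_mul_rpow_half_div_sq {l Λ η : ℝ} (hl : 0 ≤ l) (hΛ : 0 < Λ) :
    Λ ^ η * ((l / Λ) ^ (η / 2)) ^ 2 = l ^ η := by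
  rw [← Real.rpow_mul_natCast (by positivity), Nat.cast_two, div_mul_cancel₀ _ two_ne_zero,
    ← Real.mul_rpow hΛ.le (by positivity), mul_div_cancel₀ _ hΛ.ne']

lemma le_of_div_le_div_pow {R l c : ℝ} (hc : 0 < c) (hl : 0 ≤ l) (hlc : l ≤ c) {n : ℕ}
    (hn : n ≠ 0) (h : R / c ≤ (l / c) ^ n) : R ≤ l := by
  rw [← div_le_div_iff_of_pos_right hc]
  exact h.trans (pow_le_of_le_one (by positivity) ((div_le_one hc).2 hlc) hn)

lemma separated_subarc {a b l₁ l₂ w D : ℝ} {m j : ℕ} (hw : 0 ≤ w) (hmw : m * w = l₁)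
    (hj : j ∈ range m) (hsep : b + l₂ + D ≤ a ∨ a + l₁ + D ≤ b) :
    a + j * w + w + D ≤ b ∨ b + l₂ + D ≤ a + j * w := by
  have hjm : (j + 1 : ℝ) * w ≤ m * w := by
    gcongr
    exact_mod_cast mem_range.1 hj
  rcases hsep with h | h
  · exact Or.inr (by linarith [show 0 ≤ j * w by positivity])
  · exact Or.inl (by linarith)

lemma SixthMomentBound.mixedMoment_arc_le {Λ A η : ℝ} (hV : SixthMomentBound v S A η R (Λ / 2))
    (hR : 0 < R) (hA : 0 ≤ A) (hη : 0 ≤ η) (a b : ℝ) {l₁ l₂ : ℝ} (hRl₁ : R ≤ l₁)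
    (hl₁ : l₁ ≤ Λ / 2) (hRl₂ : R ≤ l₂) (hl₂ : l₂ ≤ Λ / 2) :
    mixedMoment v (arc S a l₁) (arc S b l₂) ≤ A * Λ ^ η * l₁ * l₂ ^ 2 := by
  have bound (c : ℝ) {l : ℝ} (hl : R ≤ l) (hl' : l ≤ Λ / 2) :
      sixthMoment v (arc S c l) ≤ A * Λ ^ η * l ^ 3 := by
    have hl0 : 0 ≤ l := hR.le.trans hl
    refine (hV c l hl hl').trans ?_
    gcongr
    linarith
  exact mixedMoment_le_of_sixthMoment_le v (hR.trans_le hRl₁) (hR.trans_le hRl₂)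
    (bound a hRl₁ hl₁) (bound b hRl₂ hl₂)

/- Subdivide the first arc to the critical width `l₂ ^ 2 / (2 * Λ)` and swap the two arcs by
Cauchy–Schwarz: the second arc, of relative length `l₂ / Λ`, is replaced by one of relative length
at most `(l₂ / Λ) ^ 2`, so that after `J` steps the factor `(l₂ / Λ) ^ (η / 2)` has been gained `J`
times. -/
lemma Transversal.mixedMoment_arc_le (hT : Transversal v S R C) {Λ D A η : ℝ} (hR : 0 < R)
    (hD : 0 < D) (hDΛ : 2 * C * Λ ≤ D) (hA : 0 ≤ A) (hη : 0 ≤ η)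
    (hV : SixthMomentBound v S A η R (Λ / 2)) (J : ℕ) :
    ∀ a b l₁ l₂ : ℝ, R ≤ l₁ → l₁ ≤ Λ / 2 → 0 < l₂ → l₂ ≤ Λ / 2 → l₂ ^ 2 ≤ 2 * Λ * l₁ →
      R / (2 * Λ) ≤ (l₂ / (2 * Λ)) ^ 2 ^ J → (b + l₂ + D ≤ a ∨ a + l₁ + D ≤ b) →
      mixedMoment v (arc S a l₁) (arc S b l₂) ≤
        9 * A * Λ ^ η * ((l₂ / Λ) ^ (η / 2)) ^ J * l₁ * l₂ ^ 2 := by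
  induction J with
  | zero =>
    intro a b l₁ l₂ hRl₁ hl₁ hl₂0 hl₂ _ hJ _
    have hRl₂ : R ≤ l₂ := le_of_div_le_div_pow (by linarith) hl₂0.le (by linarith) (by simp) hJ
    have hl₁0 : 0 < l₁ := hR.trans_le hRl₁
    have hΛ : 0 < Λ := by linarith
    refine (hV.mixedMoment_arc_le hR hA hη a b hRl₁ hl₁ hRl₂ hl₂).trans ?_
    rw [pow_zero, mul_one]
    linarith [show 0 ≤ A * Λ ^ η * l₁ * l₂ ^ 2 by positivity]
  | succ J ih =>
    intro a b l₁ l₂ hRl₁ hl₁ hl₂0 hl₂ hsq hJ hsep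
    have hΛ : 0 < Λ := by linarith
    have hRl₂ : R ≤ l₂ := le_of_div_le_div_pow (by linarith) hl₂0.le (by linarith) (by simp) hJ
    obtain ⟨m, w, hmw, hw, hw₂, hwl, hwu⟩ := exists_critical_subdivision hl₂0 hl₂ hsq
    have hρ := rpow_half_div_le hw.le hl₂0.le hΛ hη hwu
    have hρη := rpow_mul_rpow_half_div_sq (η := η) hl₂0.le hΛ
    set ρ := (l₂ / Λ) ^ (η / 2)
    have hJw : R / (2 * Λ) ≤ (w / (2 * Λ)) ^ 2 ^ J := by
      calc R / (2 * Λ) ≤ (l₂ ^ 2 / (2 * Λ) / (2 * Λ)) ^ 2 ^ J := by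
            rwa [div_div, ← sq, ← div_pow, ← pow_mul, ← pow_succ']
        _ ≤ (w / (2 * Λ)) ^ 2 ^ J := by gcongr
    have hswap (j : ℕ) (hj : j ∈ range m) : mixedMoment v (arc S b l₂) (arc S (a + j * w) w) ≤
        9 * A * Λ ^ η * (ρ ^ 2) ^ J * l₂ * w ^ 2 :=
      (ih b (a + j * w) l₂ w hRl₂ hl₂ hw (by linarith) (by nlinarith) hJw
        (separated_subarc hw.le hmw hj hsep)).trans (by gcongr)
    have hwD : C * l₂ ^ 2 ≤ w * D := by
      calc C * l₂ ^ 2 = l₂ ^ 2 / (2 * Λ) * (2 * C * Λ) := by field_simp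
        _ ≤ l₂ ^ 2 / (2 * Λ) * D := by gcongr
        _ ≤ w * D := by gcongr
    exact (hT.mixedMoment_arc_le_of_swap (V := A * (Λ ^ η * ρ ^ 2))
      (M := 3 * A * Λ ^ η * ρ ^ (J + 1)) hw hmw hRl₂ hD hsep hwD (by positivity)
      (le_of_eq (by ring)) (hρη ▸ hV b l₂ hRl₂ hl₂) hswap).trans_eq (by ring)

lemma sixthMoment_biUnion_le {ι : Type*} [DecidableEq ι] (v : ι → G) {Q : ℕ} (hQ : 0 < Q)
    (H : ℕ) {A : ℕ → Finset ι} (hA : (range Q : Set ℕ).PairwiseDisjoint A) :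
    sixthMoment v ((range Q).biUnion A) ≤
      (2 * H + 2) ^ 6 * ∑ j ∈ range Q, sixthMoment v (A j) +
        (Q : ℝ) ^ 8 *
          ∑ i ∈ range Q, ∑ j ∈ range Q with H < Nat.dist i j, mixedMoment v (A i) (A j) := by
  calc sixthMoment v ((range Q).biUnion A)
      ≤ ∑ ψ : AddChar G ℂ, (∑ j ∈ range Q, ‖expSum v (A j) ψ‖) ^ 6 := by
        refine sum_le_sum fun ψ _ => ?_
        rw [expSum_biUnion v hA]
        gcongr
        exact norm_sum_le _ _
    _ ≤ ∑ ψ : AddChar G ℂ, ((2 * H + 2) ^ 6 * ∑ j ∈ range Q, ‖expSum v (A j) ψ‖ ^ 6 +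
          (Q : ℝ) ^ 8 * ∑ i ∈ range Q, ∑ j ∈ range Q with H < Nat.dist i j,
            ‖expSum v (A i) ψ‖ ^ 2 * ‖expSum v (A j) ψ‖ ^ 4) :=
        sum_le_sum fun ψ _ => sum_pow_add_le_sum_pow_add_sum_far hQ H 2 4 fun j => norm_nonneg _
    _ = _ := by
        rw [sum_add_distrib, ← mul_sum, ← mul_sum]
        congr 2
        · exact sum_comm
        · rw [sum_comm]
          exact sum_congr rfl fun i _ => sum_comm

lemma separated_of_lt_dist {a w : ℝ} (hw : 0 ≤ w) {H i j : ℕ} (hij : H < Nat.dist i j) :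
    a + j * w + w + H * w ≤ a + i * w ∨ a + i * w + w + H * w ≤ a + j * w := by
  have hle {p q : ℕ} (h : p + H + 1 ≤ q) : a + p * w + w + H * w ≤ a + q * w := by
    have : (p + H + 1 : ℝ) * w ≤ q * w := by
      gcongr
      exact_mod_cast h
    linarith
  rcases (show j + H + 1 ≤ i ∨ i + H + 1 ≤ j by unfold Nat.dist at hij; lia) with h | h
  · exact Or.inl (hle h)
  · exact Or.inr (hle h)

lemma Transversal.mixedMoment_far_le (hT : Transversal v S R C) {H J : ℕ} {w A η : ℝ}
    (hR : 0 < R) (hH : 0 < H) (hCH : 4 * C ≤ H) (hA : 0 ≤ A) (hη : 0 ≤ η)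
    (hRw : 4 ^ 2 ^ J * R ≤ w) (hV : SixthMomentBound v S A η R w) (a : ℝ) {i j : ℕ}
    (hij : H < Nat.dist i j) :
    mixedMoment v (arc S (a + i * w) w) (arc S (a + j * w) w) ≤
      9 * A * (2 * w) ^ η * ((1 / 2) ^ (η / 2)) ^ J * w ^ 3 := by
  have h1 : (1 : ℝ) ≤ 4 ^ 2 ^ J := one_le_pow₀ (by norm_num)
  have hRw' : R ≤ w := (le_mul_of_one_le_left hR.le h1).trans hRw
  have hw : 0 < w := hR.trans_le hRw'
  have hscale : R / (2 * (2 * w)) ≤ (w / (2 * (2 * w))) ^ 2 ^ J := by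
    rw [show w / (2 * (2 * w)) = 1 / 4 by field_simp; norm_num, div_pow, one_pow,
      div_le_div_iff₀ (by positivity) (by positivity)]
    linarith
  convert hT.mixedMoment_arc_le (Λ := 2 * w) (D := H * w) hR (by positivity)
    (by nlinarith) hA hη (by simpa using hV) J (a + i * w) (a + j * w) w w hRw' (by simp) hw
    (by simp) (by nlinarith) hscale (separated_of_lt_dist hw.le hij) using 1
  rw [show w / (2 * w) = 1 / 2 by field_simp]
  ring

lemma sixthMoment_arc_le_of_le (v : ℤ → G) (S : Finset ℤ) (a : ℝ) {w B B' : ℝ} (hw : 0 < w)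
    {H Q : ℕ} (hQ : 0 < Q) (hB' : 0 ≤ B')
    (hmoment : ∀ j ∈ range Q, sixthMoment v (arc S (a + j * w) w) ≤ B)
    (hfar : ∀ i ∈ range Q, ∀ j ∈ range Q, H < Nat.dist i j →
      mixedMoment v (arc S (a + i * w) w) (arc S (a + j * w) w) ≤ B') :
    sixthMoment v (arc S a (Q * w)) ≤ (2 * H + 2) ^ 6 * (Q * B) + Q ^ 10 * B' := by
  calc sixthMoment v (arc S a (Q * w))
      ≤ (2 * H + 2) ^ 6 * ∑ j ∈ range Q, sixthMoment v (arc S (a + j * w) w) +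
          (Q : ℝ) ^ 8 * ∑ i ∈ range Q, ∑ j ∈ range Q with H < Nat.dist i j,
            mixedMoment v (arc S (a + i * w) w) (arc S (a + j * w) w) := by
        rw [← biUnion_arc S a hw Q]
        exact sixthMoment_biUnion_le v hQ H (pairwiseDisjoint_arc S a w _)
    _ ≤ (2 * H + 2) ^ 6 * ∑ _j ∈ range Q, B +
          (Q : ℝ) ^ 8 * ∑ _i ∈ range Q, ∑ _j ∈ range Q, B' := by
        gcongr with j hj i hi
        · exact hmoment j hj
        · exact (sum_le_sum fun j hj =>
            hfar i hi j (mem_filter.1 hj).1 (mem_filter.1 hj).2).trans <|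
              sum_le_sum_of_subset_of_nonneg (filter_subset _ _) fun _ _ _ => hB'
    _ = (2 * H + 2) ^ 6 * (Q * B) + Q ^ 10 * B' := by
        simp only [sum_const, card_range, nsmul_eq_mul]
        ring

lemma Transversal.sixthMoment_arc_le (hT : Transversal v S R C) {H Q J : ℕ} {L A η : ℝ}
    (hR : 0 < R) (hH : 0 < H) (hCH : 4 * C ≤ H) (hA : 0 ≤ A) (hη : 0 ≤ η)
    (hQ : Q = 2 * (2 * H + 2) ^ 3)
    (hJ : 9 * (Q : ℝ) ^ 7 * ((1 / 2) ^ (η / 2)) ^ J ≤ 3 / 4) (hL : Q * 4 ^ 2 ^ J * R ≤ L)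
    (hV : SixthMomentBound v S A η R (L / Q)) (a : ℝ) :
    sixthMoment v (arc S a L) ≤ A * L ^ η * L ^ 3 := by
  have hQ2 : 2 ≤ Q := hQ ▸ Nat.le_mul_of_pos_right 2 (by positivity)
  have hQ0 : (0 : ℝ) < Q := by positivity
  obtain ⟨w, rfl⟩ : ∃ w, L = Q * w := ⟨L / Q, by field_simp⟩
  rw [mul_div_cancel_left₀ w hQ0.ne'] at hV
  have hRw : 4 ^ 2 ^ J * R ≤ w := by
    rw [mul_assoc] at hL
    exact le_of_mul_le_mul_left hL hQ0
  have hRw' : R ≤ w :=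
    (le_mul_of_one_le_left hR.le (one_le_pow₀ (by norm_num))).trans hRw
  have hw : 0 < w := hR.trans_le hRw'
  have near (j : ℕ) : sixthMoment v (arc S (a + j * w) w) ≤ A * (Q * w) ^ η * w ^ 3 := by
    refine (hV _ w hRw' le_rfl).trans ?_
    gcongr
    exact le_mul_of_one_le_left hw.le (by exact_mod_cast (by lia : 1 ≤ Q))
  have far {i j : ℕ} (hij : H < Nat.dist i j) :
      mixedMoment v (arc S (a + i * w) w) (arc S (a + j * w) w) ≤
        9 * A * (Q * w) ^ η * ((1 / 2) ^ (η / 2)) ^ J * w ^ 3 := by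
    refine (hT.mixedMoment_far_le hR hH hCH hA hη hRw hV a hij).trans ?_
    gcongr
    exact_mod_cast hQ2
  have hratio : (2 * H + 2 : ℝ) ^ 6 / Q ^ 2 = 1 / 4 := by
    rw [hQ]
    push_cast
    field_simp
    norm_num
  calc sixthMoment v (arc S a (Q * w))
      ≤ (2 * H + 2) ^ 6 * (Q * (A * (Q * w) ^ η * w ^ 3)) +
          Q ^ 10 * (9 * A * (Q * w) ^ η * ((1 / 2) ^ (η / 2)) ^ J * w ^ 3) :=
        sixthMoment_arc_le_of_le v S a hw (by lia) (by positivity) (fun j _ => near j)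
          fun i _ j _ => far
    _ = A * (Q * w) ^ η * (Q * w) ^ 3 *
          ((2 * H + 2) ^ 6 / Q ^ 2 + 9 * Q ^ 7 * ((1 / 2) ^ (η / 2)) ^ J) := by field_simp
    _ ≤ A * (Q * w) ^ η * (Q * w) ^ 3 * (1 / 4 + 3 / 4) := by
        rw [hratio]
        gcongr
    _ = A * (Q * w) ^ η * (Q * w) ^ 3 := by ring

end BilinearIteration

section FiniteModel

open Finset

lemma exists_sixthMomentBound_extends (C : ℝ) {η : ℝ} (hη : 0 < η) : ∃ T : ℝ,
    ∀ (G : Type) [AddCommGroup G] [Finite G] (v : ℤ → G) (S : Finset ℤ) (R A : ℝ), 0 < R →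
      0 ≤ A → Transversal v S R C → SixthMomentBound v S A η R (T * R) →
      ∀ L, SixthMomentBound v S A η R L := by
  obtain ⟨H, hCH⟩ := exists_nat_ge (max 1 (4 * C))
  have hH : 0 < H := by exact_mod_cast zero_lt_one.trans_le ((le_max_left ..).trans hCH)
  obtain ⟨Q, hQ⟩ : ∃ Q, Q = 2 * (2 * H + 2) ^ 3 := ⟨_, rfl⟩
  have hQ2 : 2 ≤ Q := hQ ▸ Nat.le_mul_of_pos_right 2 (by positivity)
  have hQ1 : (1 : ℝ) < Q := by exact_mod_cast hQ2
  obtain ⟨J, hJ⟩ := exists_pow_lt_of_lt_one (show (0 : ℝ) < 3 / 4 / (9 * (Q : ℝ) ^ 7) by positivity)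
    (Real.rpow_lt_one (by norm_num : (0 : ℝ) ≤ 1 / 2) (by norm_num) (by positivity : 0 < η / 2))
  rw [lt_div_iff₀' (by positivity)] at hJ
  refine ⟨Q * 4 ^ 2 ^ J, fun G _ _ v S R A hR hA hT hbase => ?_⟩
  have step (i : ℕ) : SixthMomentBound v S A η R (Q * 4 ^ 2 ^ J * R * Q ^ i) := by
    induction i with
    | zero => simpa using hbase
    | succ i ih =>
      intro a l hRl hl
      rcases le_total l (Q * 4 ^ 2 ^ J * R) with hlT | hlT
      · exact hbase a l hRl hlT
      refine hT.sixthMoment_arc_le hR hH ((le_max_right ..).trans hCH) hA hη.le hQ hJ.le hlT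
        (fun a' l' hRl' hl' => ih a' l' hRl' (hl'.trans ?_)) a
      rwa [div_le_iff₀ (by positivity), mul_assoc _ _ (Q : ℝ), ← pow_succ]
  intro L a l hRl _
  obtain ⟨i, hi⟩ := pow_unbounded_of_one_lt (l / (Q * 4 ^ 2 ^ J * R)) hQ1
  exact step i a l hRl ((div_lt_iff₀' (by positivity)).1 hi).le

lemma exists_addMonoidHom_finite_injOn (E : Finset (ℤ × ℤ)) :
    ∃ (G : Type) (_ : AddCommGroup G) (_ : Finite G) (φ : ℤ × ℤ →+ G), Set.InjOn φ E := by
  obtain ⟨M, hM⟩ : ∃ M : ℕ, ∀ x ∈ E, x.1.natAbs ≤ M ∧ x.2.natAbs ≤ M :=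
    ⟨E.sup fun x => max x.1.natAbs x.2.natAbs, fun x hx => max_le_iff.1 <|
      le_sup (f := fun x : ℤ × ℤ => max x.1.natAbs x.2.natAbs) hx⟩
  have inj {a b : ℤ} (ha : a.natAbs ≤ M) (hb : b.natAbs ≤ M)
      (h : (a : ZMod (2 * M + 1)) = b) : a = b := by
    rw [ZMod.intCast_eq_intCast_iff_dvd_sub] at h
    have := Int.eq_zero_of_abs_lt_dvd h (abs_lt.2 (by lia))
    lia
  refine ⟨ZMod (2 * M + 1) × ZMod (2 * M + 1), inferInstance, inferInstance,
    (Int.castAddHom _).prodMap (Int.castAddHom _), fun x hx y hy hxy => ?_⟩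
  obtain ⟨h₁, h₂⟩ := Prod.ext_iff.1 hxy
  exact Prod.ext (inj (hM x hx).1 (hM y hy).1 h₁) (inj (hM x hx).2 (hM y hy).2 h₂)

lemma higherEnergy_comp_of_injOn {ι G H : Type*} [AddCommGroup G] [DecidableEq G] [AddCommGroup H]
    [DecidableEq H] {s : ℕ} {v : ι → G} {A : Finset ι} {φ : G →+ H}
    (hφ : Set.InjOn φ ((fun x : Fin s → ι => ∑ i, v (x i)) '' {x | ∀ i, x i ∈ A})) :
    higherEnergy s (φ ∘ v) A = higherEnergy s v A := by
  refine congrArg card (filter_congr fun p hp => ?_)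
  rw [mem_product, Fintype.mem_piFinset, Fintype.mem_piFinset] at hp
  simp only [Function.comp_apply, ← map_sum]
  exact hφ.eq_iff ⟨p.1, hp.1, rfl⟩ ⟨p.2, hp.2, rfl⟩

lemma Transversal.comp {G H : Type*} [AddCommGroup G] [AddCommGroup H] {v : ℤ → G} {S : Finset ℤ}
    {R C : ℝ} (hT : Transversal v S R C) {φ : G →+ H}
    (hφ : Set.InjOn φ ((fun x : Fin 3 → ℤ => ∑ i, v (x i)) '' {x | ∀ i, x i ∈ S})) :
    Transversal (φ ∘ v) S R C := by
  intro a l D hl hD n hn n' hn' hside m₁ hm₁ m₂ hm₂ m₁' hm₁' m₂' hm₂' heq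
  refine hT a l D hl hD n hn n' hn' hside m₁ hm₁ m₂ hm₂ m₁' hm₁' m₂' hm₂' ?_
  have mem {x y z : ℤ} (hx : x ∈ S) (hy : y ∈ arc S a l) (hz : z ∈ arc S a l) :
      v x + (v y + v z) ∈ (fun x : Fin 3 → ℤ => ∑ i, v (x i)) '' {x | ∀ i, x i ∈ S} :=
    ⟨![x, y, z], by simpa [Fin.forall_fin_succ] using ⟨hx, (mem_arc.1 hy).1, (mem_arc.1 hz).1⟩,
      by simp [Fin.sum_univ_three, add_assoc]⟩
  exact hφ (mem hn hm₁ hm₂) (mem hn' hm₁' hm₂') (by simpa using heq)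

lemma exists_higherEnergy_arc_bound_extends (C : ℝ) {η : ℝ} (hη : 0 < η) : ∃ T : ℝ,
    ∀ (v : ℤ → ℤ × ℤ) (S : Finset ℤ) (R A : ℝ), 0 < R → 0 ≤ A → Transversal v S R C →
      (∀ a l, R ≤ l → l ≤ T * R → (higherEnergy 3 v (arc S a l) : ℝ) ≤ A * l ^ η * l ^ 3) →
      ∀ a l, R ≤ l → (higherEnergy 3 v (arc S a l) : ℝ) ≤ A * l ^ η * l ^ 3 := by
  obtain ⟨T, hT⟩ := exists_sixthMomentBound_extends C hη
  refine ⟨T, fun v S R A hR hA hv hbase a l hl => ?_⟩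
  obtain ⟨G, _, _, φ, hφ⟩ := exists_addMonoidHom_finite_injOn
    ((Fintype.piFinset fun _ : Fin 3 => S).image fun x => ∑ i, v (x i))
  classical
  simp only [coe_image, Fintype.coe_piFinset, Set.pi, Set.mem_univ, true_imp_iff, mem_coe] at hφ
  have hmoment (a l : ℝ) :
      sixthMoment (φ ∘ v) (arc S a l) = Nat.card G * higherEnergy 3 v (arc S a l) := by
    rw [← higherEnergy_comp_of_injOn (φ := φ), ← sum_norm_expSum_pow_two_mul]
    · rfl
    · exact hφ.mono (Set.image_mono fun x hx i => (mem_arc.1 (hx i)).1)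
  have hG : (0 : ℝ) < Nat.card G := by exact_mod_cast Nat.card_pos
  have := hT G (φ ∘ v) S R (Nat.card G * A) hR (by positivity) (hv.comp hφ)
    (fun a l hl hl' => by
      rw [hmoment, mul_assoc, mul_assoc, ← mul_assoc A]
      gcongr
      exact hbase a l hl hl') l a l hl le_rfl
  rw [hmoment, mul_assoc, mul_assoc, ← mul_assoc A] at this
  exact le_of_mul_le_mul_left this hG

end FiniteModel

section Coincidences

open Finset

variable {α β γ G : Type*} [DecidableEq γ] [AddCommGroup G] [DecidableEq G]

lemma card_filter_eq_sum_fibers {S : Finset α} (T : Finset β) {U : Finset γ} {f : α → γ}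
    (g : β → γ) (hf : Set.MapsTo f S U) :
    #{p ∈ S ×ˢ T | f p.1 = g p.2} = ∑ u ∈ U, #{x ∈ S | f x = u} * #{y ∈ T | g y = u} := by
  rw [card_eq_sum_card_fiberwise (f := fun p => f p.1) (t := U)
    fun p hp => hf (mem_product.1 (mem_filter.1 hp).1).1]
  refine sum_congr rfl fun u _ => ?_
  rw [← card_product, ← filter_product, filter_filter]
  congr 1
  grind

lemma two_mul_card_filter_eq_le (S : Finset α) (T : Finset β) (f : α → γ) (g : β → γ) :
    2 * #{p ∈ S ×ˢ T | f p.1 = g p.2} ≤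
      #{p ∈ S ×ˢ S | f p.1 = f p.2} + #{p ∈ T ×ˢ T | g p.1 = g p.2} := by
  have hf : Set.MapsTo f S (S.image f ∪ T.image g : Finset γ) := fun x hx =>
    mem_union_left _ (mem_image_of_mem f hx)
  have hg : Set.MapsTo g T (S.image f ∪ T.image g : Finset γ) := fun x hx =>
    mem_union_right _ (mem_image_of_mem g hx)
  rw [card_filter_eq_sum_fibers T g hf, card_filter_eq_sum_fibers S f hf,
    card_filter_eq_sum_fibers T g hg, mul_sum, ← sum_add_distrib]
  refine sum_le_sum fun u _ => ?_
  rw [← mul_assoc, ← sq, ← sq]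
  exact two_mul_le_add_sq _ _

lemma card_filter_sub_eq_le (S : Finset α) (f : α → G) (h : G) :
    #{p ∈ S ×ˢ S | f p.1 - f p.2 = h} ≤ #{p ∈ S ×ˢ S | f p.1 = f p.2} := by
  have := two_mul_card_filter_eq_le S S f fun y => h + f y
  simp only [add_right_inj] at this
  simp only [sub_eq_iff_eq_add]
  lia

lemma card_filter_sub_mem_le (S : Finset α) (f : α → G) (H : Finset G) :
    #{p ∈ S ×ˢ S | f p.1 - f p.2 ∈ H} ≤ #{p ∈ S ×ˢ S | f p.1 = f p.2} * #H := by
  refine card_le_mul_card_image_of_maps_to (f := fun p : α × α => f p.1 - f p.2) (t := H)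
    (fun p hp => (mem_filter.1 hp).2) _ fun h _ => ?_
  refine le_trans ?_ (card_filter_sub_eq_le S f h)
  rw [filter_filter]
  exact card_le_card (monotone_filter_right _ fun p _ hp => hp.2)

lemma card_sum_sub_sum_mem_le (s : ℕ) (v : α → G) (A : Finset α) (H : Finset G) :
    #{p ∈ (Fintype.piFinset fun _ : Fin s => A) ×ˢ (Fintype.piFinset fun _ : Fin s => A) |
        ∑ i, v (p.1 i) - ∑ i, v (p.2 i) ∈ H} ≤ higherEnergy s v A * #H :=
  card_filter_sub_mem_le _ (fun x : Fin s → α => ∑ i, v (x i)) H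

end Coincidences

section DivisorBound

open Finset

lemma add_one_le_div_mul_pow {r : ℝ} (hr : 1 < r) (m : ℕ) :
    (m : ℝ) + 1 ≤ r / (r - 1) * r ^ m := by
  have hr' : 0 < r - 1 := sub_pos.2 hr
  have bernoulli : 1 + m * (r - 1) ≤ r ^ m := by
    simpa using one_add_mul_le_pow (a := r - 1) (by linarith) m
  calc (m : ℝ) + 1 ≤ m + 1 + (m * (r - 1) + 1 / (r - 1)) :=
        le_add_of_nonneg_right (by positivity)
    _ = r / (r - 1) * (1 + m * (r - 1)) := by field_simp; ring
    _ ≤ r / (r - 1) * r ^ m := by gcongr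

lemma natCast_rpow_eq_prod_primeFactors {n : ℕ} (hn : n ≠ 0) (ε : ℝ) :
    (n : ℝ) ^ ε = ∏ p ∈ n.primeFactors, ((p : ℝ) ^ ε) ^ n.factorization p := by
  conv_lhs => rw [← Nat.prod_factorization_pow_eq_self hn]
  rw [Finsupp.prod, Nat.support_factorization, Nat.cast_prod,
    ← Real.finsetProd_rpow _ _ fun _ _ => by positivity]
  refine prod_congr rfl fun p _ => ?_
  rw [Nat.cast_pow, Real.rpow_pow_comm p.cast_nonneg]

lemma add_one_le_ite_mul_rpow_pow {ε : ℝ} (hε : 0 < ε) {p : ℕ} (hp : 2 ≤ p) (m : ℕ) :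
    (m : ℝ) + 1 ≤
      (if p < ⌈(2 : ℝ) ^ (1 / ε)⌉₊ then 2 ^ ε / (2 ^ ε - 1) else 1) * ((p : ℝ) ^ ε) ^ m := by
  have hr : (1 : ℝ) < 2 ^ ε := Real.one_lt_rpow (by norm_num) hε
  split_ifs with h
  · refine (add_one_le_div_mul_pow hr m).trans ?_
    have : (0 : ℝ) < 2 ^ ε - 1 := sub_pos.2 hr
    gcongr
    exact_mod_cast hp
  · have h2 : (2 : ℝ) ≤ (p : ℝ) ^ ε := by
      calc (2 : ℝ) = ((2 : ℝ) ^ (1 / ε)) ^ ε := by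
            rw [← Real.rpow_mul (by norm_num), one_div_mul_cancel hε.ne', Real.rpow_one]
        _ ≤ (p : ℝ) ^ ε := by
            gcongr
            exact Nat.ceil_le.1 (not_lt.1 h)
    calc (m : ℝ) + 1 ≤ 2 ^ m := by exact_mod_cast Nat.lt_two_pow_self
      _ ≤ 1 * ((p : ℝ) ^ ε) ^ m := by
          rw [one_mul]
          gcongr

lemma exists_card_divisors_le_rpow {ε : ℝ} (hε : 0 < ε) : ∃ K : ℝ, 0 < K ∧ ∀ n : ℕ, n ≠ 0 →
    (#n.divisors : ℝ) ≤ K * (n : ℝ) ^ ε := by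
  have hr : (1 : ℝ) < 2 ^ ε := Real.one_lt_rpow (by norm_num) hε
  set κ : ℝ := 2 ^ ε / (2 ^ ε - 1)
  have hκ1 : 1 ≤ κ := (one_le_div (sub_pos.2 hr)).2 (by linarith)
  set P : ℕ := ⌈(2 : ℝ) ^ (1 / ε)⌉₊
  refine ⟨κ ^ P, by positivity, fun n hn => ?_⟩
  rw [Nat.card_divisors hn, natCast_rpow_eq_prod_primeFactors hn]
  push_cast
  calc ∏ p ∈ n.primeFactors, ((n.factorization p : ℝ) + 1)
      ≤ ∏ p ∈ n.primeFactors, (if p < P then κ else 1) * ((p : ℝ) ^ ε) ^ n.factorization p :=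
        prod_le_prod (fun _ _ => by positivity) fun p hp =>
          add_one_le_ite_mul_rpow_pow hε (Nat.prime_of_mem_primeFactors hp).two_le _
    _ = κ ^ #{p ∈ n.primeFactors | p < P} *
          ∏ p ∈ n.primeFactors, ((p : ℝ) ^ ε) ^ n.factorization p := by
        rw [prod_mul_distrib, ← prod_filter, prod_const]
    _ ≤ κ ^ P * ∏ p ∈ n.primeFactors, ((p : ℝ) ^ ε) ^ n.factorization p := by
        gcongr
        exact (card_le_card fun p hp => mem_range.2 (mem_filter.1 hp).2).trans_eq (card_range P)

end DivisorBound

section Parabola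

open Finset

lemma sub_mul_sub_eq_of_parabola {x y : Fin 3 → ℤ}
    (h : ∑ i, (x i, x i ^ 2) = ∑ i, (y i, y i ^ 2)) :
    (x 0 - y 0) * (x 1 - y 0) = (y 1 - x 2) * (y 2 - x 2) := by
  simp only [Fin.sum_univ_three, Prod.mk_add_mk, Prod.mk.injEq] at h
  obtain ⟨h₁, h₂⟩ := h
  refine mul_left_cancel₀ two_ne_zero ?_
  linear_combination (x 0 + x 1 - x 2 - y 0 + y 1 + y 2) * h₁ - h₂

lemma mem_perms_of_parabola {x y : Fin 3 → ℤ}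
    (h : ∑ i, (x i, x i ^ 2) = ∑ i, (y i, y i ^ 2)) (h0 : (x 0 - y 0) * (x 1 - y 0) = 0) :
    y ∈ ({![x 0, x 2, x 1], ![x 0, x 1, x 2], ![x 1, x 2, x 0], ![x 1, x 0, x 2]} :
      Finset (Fin 3 → ℤ)) := by
  have hy := (sub_mul_sub_eq_of_parabola h).symm.trans h0
  simp only [Fin.sum_univ_three, Prod.mk_add_mk, Prod.mk.injEq] at h
  simp only [mem_insert, mem_singleton, funext_iff, Fin.forall_fin_succ, Fin.isValue]
  rw [mul_eq_zero] at h0 hy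
  simp only [Nat.succ_eq_add_one, Nat.reduceAdd, Matrix.cons_val_zero, Fin.succ_zero_eq_one,
    Matrix.cons_val_one, Fin.succ_one_eq_two, Matrix.cons_val, Matrix.cons_val_succ,
    Matrix.cons_val_fin_one, IsEmpty.forall_iff, and_true]
  lia

lemma eq_of_parabola {p q : (Fin 3 → ℤ) × (Fin 3 → ℤ)}
    (hp : ∑ i, (p.1 i, p.1 i ^ 2) = ∑ i, (p.2 i, p.2 i ^ 2))
    (hq : ∑ i, (q.1 i, q.1 i ^ 2) = ∑ i, (q.2 i, q.2 i ^ 2))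
    (hne : (q.1 0 - q.2 0) * (q.1 1 - q.2 0) ≠ 0) (h₀ : p.1 0 = q.1 0) (h₁ : p.1 1 = q.1 1)
    (h₂ : p.2 0 = q.2 0) (h₃ : p.2 1 - p.1 2 = q.2 1 - q.1 2) : p = q := by
  have hpm := sub_mul_sub_eq_of_parabola hp
  have hqm := sub_mul_sub_eq_of_parabola hq
  rw [h₀, h₁, h₂, h₃] at hpm
  have h₄ : p.2 2 - p.1 2 = q.2 2 - q.1 2 :=
    mul_left_cancel₀ (left_ne_zero_of_mul (hqm ▸ hne)) (hpm.symm.trans hqm)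
  have hps := congrArg Prod.fst hp
  have hqs := congrArg Prod.fst hq
  simp only [Fin.sum_univ_three, Prod.fst_add] at hps hqs
  ext i <;> fin_cases i <;> simp only [Fin.zero_eta, Fin.mk_one, Fin.reduceFinMk] <;> lia

lemma int_card_divisors (z : ℤ) : #z.divisors = 2 * #z.natAbs.divisors := by
  rw [Int.divisors, card_disjUnion, card_map, card_map, two_mul]

lemma card_parabola_nondegenerate_le (A : Finset ℤ) {M : ℕ}
    (hM : ∀ a ∈ A, ∀ b ∈ A, ∀ c ∈ A, #((a - c) * (b - c)).natAbs.divisors ≤ M) :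
    #{p ∈ (Fintype.piFinset fun _ : Fin 3 => A) ×ˢ (Fintype.piFinset fun _ : Fin 3 => A) |
        ∑ i, (p.1 i, p.1 i ^ 2) = ∑ i, (p.2 i, p.2 i ^ 2) ∧
          (p.1 0 - p.2 0) * (p.1 1 - p.2 0) ≠ 0} ≤ 2 * M * #A ^ 3 := by
  calc _ ≤ #((A ×ˢ A ×ˢ A).sigma fun t => ((t.1 - t.2.2) * (t.2.1 - t.2.2)).divisors) := by
        refine card_le_card_of_injOn
          (fun p => ⟨(p.1 0, p.1 1, p.2 0), p.2 1 - p.1 2⟩) (fun p hp => ?_) fun p hp q hq hpq => ?_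
        · simp only [mem_coe, mem_filter, mem_product, Fintype.mem_piFinset] at hp
          simp only [mem_coe, mem_sigma, mem_product, Int.mem_divisors]
          exact ⟨⟨hp.1.1 0, hp.1.1 1, hp.1.2 0⟩,
            ⟨_, sub_mul_sub_eq_of_parabola hp.2.1⟩, hp.2.2⟩
        · simp only [mem_coe, mem_filter] at hp hq
          simp only [Sigma.mk.injEq, Prod.mk.injEq, heq_eq_eq] at hpq
          exact eq_of_parabola hp.2.1 hq.2.1 hq.2.2 hpq.1.1 hpq.1.2.1 hpq.1.2.2 hpq.2
    _ = ∑ t ∈ A ×ˢ A ×ˢ A, 2 * #((t.1 - t.2.2) * (t.2.1 - t.2.2)).natAbs.divisors := by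
        simp only [card_sigma, int_card_divisors]
    _ ≤ #(A ×ˢ A ×ˢ A) • (2 * M) := by
        refine sum_le_card_nsmul _ _ _ fun t ht => ?_
        simp only [mem_product] at ht
        gcongr
        exact hM _ ht.1 _ ht.2.1 _ ht.2.2
    _ = 2 * M * #A ^ 3 := by
        simp only [card_product, smul_eq_mul]
        ring

lemma card_parabola_degenerate_le (A : Finset ℤ) :
    #{p ∈ (Fintype.piFinset fun _ : Fin 3 => A) ×ˢ (Fintype.piFinset fun _ : Fin 3 => A) |
        ∑ i, (p.1 i, p.1 i ^ 2) = ∑ i, (p.2 i, p.2 i ^ 2) ∧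
          (p.1 0 - p.2 0) * (p.1 1 - p.2 0) = 0} ≤ 4 * #A ^ 3 := by
  rw [← Fintype.card_piFinset_const A 3]
  refine card_le_mul_card_image_of_maps_to (f := Prod.fst)
    (fun p hp => (mem_product.1 (mem_filter.1 hp).1).1) 4 fun x _ => ?_
  calc _ ≤ #({![x 0, x 2, x 1], ![x 0, x 1, x 2], ![x 1, x 2, x 0], ![x 1, x 0, x 2]} :
        Finset (Fin 3 → ℤ)) := by
        refine card_le_card_of_injOn Prod.snd (fun p hp => ?_) fun p hp q hq hpq => ?_
        · obtain ⟨hp', rfl⟩ := mem_filter.1 hp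
          have h := (mem_filter.1 hp').2
          exact mem_perms_of_parabola h.1 h.2
        · exact Prod.ext ((mem_filter.1 hp).2.trans (mem_filter.1 hq).2.symm) hpq
    _ ≤ 4 := card_le_four

lemma higherEnergy_parabola_le (A : Finset ℤ) {M : ℕ}
    (hM : ∀ a ∈ A, ∀ b ∈ A, ∀ c ∈ A, #((a - c) * (b - c)).natAbs.divisors ≤ M) :
    higherEnergy 3 (fun n : ℤ => (n, n ^ 2)) A ≤ (4 + 2 * M) * #A ^ 3 := by
  rw [higherEnergy, ← card_filter_add_card_filter_not
    fun p : (Fin 3 → ℤ) × (Fin 3 → ℤ) => (p.1 0 - p.2 0) * (p.1 1 - p.2 0) = 0,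
    filter_filter, filter_filter, add_mul]
  exact add_le_add (card_parabola_degenerate_le A) (card_parabola_nondegenerate_le A hM)

end Parabola

section TangentDefect

lemma half_mul_pow_mul_sq_sub_sq_le (j : ℕ) {x y : ℝ} (hx : 0 ≤ x) (hy : 0 ≤ y) :
    ((j : ℝ) + 2) / 2 * x ^ j * (y ^ 2 - x ^ 2) ≤ y ^ (j + 2) - x ^ (j + 2) := by
  induction j with
  | zero => simp
  | succ j ih =>
    have hrem : 0 ≤ (y - x) * (y ^ (j + 2) - x ^ (j + 2) + y * (y ^ (j + 1) - x ^ (j + 1))) := by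
      rcases le_total x y with h | h
      · have h₁ : x ^ (j + 1) ≤ y ^ (j + 1) := by gcongr
        have h₂ : x ^ (j + 2) ≤ y ^ (j + 2) := by gcongr
        exact mul_nonneg (sub_nonneg.2 h)
          (add_nonneg (sub_nonneg.2 h₂) (mul_nonneg hy (sub_nonneg.2 h₁)))
      · have h₁ : y ^ (j + 1) ≤ x ^ (j + 1) := by gcongr
        have h₂ : y ^ (j + 2) ≤ x ^ (j + 2) := by gcongr
        exact mul_nonneg_of_nonpos_of_nonpos (sub_nonpos.2 h)
          (add_nonpos (sub_nonpos.2 h₂) (mul_nonpos_of_nonneg_of_nonpos hy (sub_nonpos.2 h₁)))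
    have ih' := mul_le_mul_of_nonneg_left ih hx
    push_cast
    linear_combination ih' + hrem / 2

lemma pow_mul_sub_le_pow_sub_pow (i : ℕ) {a x y : ℝ} (ha : 0 ≤ a) (hax : a ≤ x) (hxy : x ≤ y) :
    a ^ i * (y - x) ≤ y ^ (i + 1) - x ^ (i + 1) := by
  have hx : 0 ≤ x := ha.trans hax
  calc a ^ i * (y - x) ≤ y ^ i * (y - x) := by
        have := sub_nonneg.2 hxy
        gcongr
        exact hax.trans hxy
    _ = y ^ (i + 1) - y ^ i * x := by ring
    _ ≤ y ^ (i + 1) - x ^ i * x := by gcongr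
    _ = y ^ (i + 1) - x ^ (i + 1) := by rw [pow_succ x]

/-- The height at `u = t²` of the graph of `u ↦ u ^ ((j + 2) / 2)` above its tangent at `u = c²`. -/
def tangentDefect (j : ℕ) (c t : ℝ) : ℝ :=
  t ^ (j + 2) - c ^ (j + 2) - ((j : ℝ) + 2) / 2 * c ^ j * (t ^ 2 - c ^ 2)

namespace tangentDefect

variable {j : ℕ} {a b c s t D : ℝ}

lemma self (j : ℕ) (c : ℝ) : tangentDefect j c c = 0 := by simp [tangentDefect]

lemma le_sub (j : ℕ) (c : ℝ) (hs : 0 ≤ s) (ht : 0 ≤ t) :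
    ((j : ℝ) + 2) / 2 * ((s ^ j - c ^ j) * (t ^ 2 - s ^ 2)) ≤
      tangentDefect j c t - tangentDefect j c s := by
  unfold tangentDefect
  linear_combination half_mul_pow_mul_sq_sub_sq_le j hs ht

lemma nonneg (j : ℕ) (hc : 0 ≤ c) (ht : 0 ≤ t) : 0 ≤ tangentDefect j c t := by
  simpa [self] using le_sub j c hc ht

lemma le_mul_sub_sq (j : ℕ) (hc : 0 ≤ c) (ht : 0 ≤ t) (hcb : c ≤ b) (htb : t ≤ b) :
    tangentDefect j c t ≤ (j + 2) * j * b ^ j * (t - c) ^ 2 := by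
  have hb : 0 ≤ b := hc.trans hcb
  have hpow : |t ^ j - c ^ j| ≤ |t - c| * j * b ^ (j - 1) := by
    refine (abs_pow_sub_pow_le t c j).trans ?_
    gcongr
    rw [abs_of_nonneg hc, abs_of_nonneg ht]
    exact max_le htb hcb
  have hsq : |t ^ 2 - c ^ 2| ≤ |t - c| * (2 * b) := by
    rw [sq_sub_sq, abs_mul, mul_comm, abs_of_nonneg (add_nonneg ht hc)]
    gcongr
    linarith
  calc tangentDefect j c t ≤ ((j : ℝ) + 2) / 2 * ((t ^ j - c ^ j) * (t ^ 2 - c ^ 2)) := by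
        linear_combination le_sub j c ht hc + self j c
    _ ≤ ((j : ℝ) + 2) / 2 * ((|t - c| * j * b ^ (j - 1)) * (|t - c| * (2 * b))) := by
        refine mul_le_mul_of_nonneg_left ((le_abs_self _).trans ?_) (by positivity)
        rw [abs_mul]
        gcongr
    _ = (j + 2) * j * b ^ j * (t - c) ^ 2 := by
        rw [← sq_abs (t - c)]
        cases j with
        | zero => simp
        | succ i => rw [Nat.add_sub_cancel]; ring

lemma pow_mul_le_abs_sub (hj : j ≠ 0) (ha : 0 ≤ a) (hc : a ≤ c) (hs : a ≤ s) (ht : a ≤ t)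
    (hD : 0 ≤ D) (hside : (c + D ≤ s ∧ c + D ≤ t) ∨ (s + D ≤ c ∧ t + D ≤ c)) :
    a ^ j * D * |t - s| ≤ |tangentDefect j c t - tangentDefect j c s| := by
  wlog hst : s ≤ t generalizing s t
  · simpa only [abs_sub_comm] using this ht hs (hside.imp And.symm And.symm) (le_of_not_ge hst)
  obtain ⟨i, rfl⟩ := Nat.exists_eq_add_one_of_ne_zero hj
  have hsq : 2 * a * (t - s) ≤ t ^ 2 - s ^ 2 := by
    rw [sq_sub_sq]
    gcongr
    linarith
  have key {g : ℝ} (hg : a ^ i * D ≤ g) : a ^ (i + 1) * D * (t - s) ≤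
      (((i + 1 : ℕ) : ℝ) + 2) / 2 * (g * (t ^ 2 - s ^ 2)) := by
    have := sub_nonneg.2 hst
    calc a ^ (i + 1) * D * (t - s) = 1 / 2 * ((a ^ i * D) * (2 * a * (t - s))) := by ring
      _ ≤ (((i + 1 : ℕ) : ℝ) + 2) / 2 * (g * (t ^ 2 - s ^ 2)) := by
        have hg0 : 0 ≤ g := le_trans (by positivity) hg
        have : (0 : ℝ) ≤ (i + 1 : ℕ) := Nat.cast_nonneg _
        gcongr
        linarith
  rw [abs_of_nonneg (sub_nonneg.2 hst)]
  rcases hside with ⟨h, -⟩ | ⟨-, h⟩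
  · have hgap : a ^ i * D ≤ s ^ (i + 1) - c ^ (i + 1) := by
      refine le_trans ?_ (pow_mul_sub_le_pow_sub_pow i ha hc (by linarith))
      gcongr
      linarith
    exact (key hgap).trans ((le_sub _ c (ha.trans hs) (ha.trans ht)).trans (le_abs_self _))
  · have hgap : a ^ i * D ≤ c ^ (i + 1) - t ^ (i + 1) := by
      refine le_trans ?_ (pow_mul_sub_le_pow_sub_pow i ha ht (by linarith))
      gcongr
      linarith
    rw [abs_sub_comm]
    refine (key hgap).trans (le_of_eq_of_le ?_
      ((le_sub _ c (ha.trans ht) (ha.trans hs)).trans (le_abs_self _)))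
    push_cast
    ring

end tangentDefect

end TangentDefect

section Curve

open Finset

/-- The integer points `(n², ⌊n ^ k / N ^ (k - 1)⌋)`. For `n` of size `N` both coordinates vary at
comparable rates, and an equation in the second coordinate amounts to one between `k`-th powers with
an error `O(N ^ (k - 1))`. -/
def curve (k N : ℕ) (n : ℤ) : ℤ × ℤ := (n ^ 2, n ^ k / (N : ℤ) ^ (k - 1))

lemma abs_sum_sub_sum_sub_mul_ediv_le {ι : Type*} (s : Finset ι) {P : ℤ} (hP : 0 < P)
    (a b : ι → ℤ) :
    |(∑ i ∈ s, a i - ∑ i ∈ s, b i) - P * (∑ i ∈ s, a i / P - ∑ i ∈ s, b i / P)| ≤ #s * P := by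
  have hmod : (∑ i ∈ s, a i - ∑ i ∈ s, b i) - P * (∑ i ∈ s, a i / P - ∑ i ∈ s, b i / P) =
      ∑ i ∈ s, (a i % P - b i % P) := by
    simp only [Int.emod_def, sum_sub_distrib, ← mul_sum]
    ring
  rw [hmod]
  refine (abs_sum_le_sum_abs _ _).trans ((sum_le_card_nsmul _ _ P fun i _ => ?_).trans_eq
    (nsmul_eq_mul _ _))
  have ha := Int.emod_nonneg (a i) hP.ne'
  have hb := Int.emod_nonneg (b i) hP.ne'
  have ha' := Int.emod_lt_of_pos (a i) hP
  have hb' := Int.emod_lt_of_pos (b i) hP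
  rw [abs_le]
  constructor <;> linarith

lemma pow_mul_abs_sub_mul_le_of_sq_add_eq {j : ℕ} (hj : j ≠ 0) {N l D E : ℝ} (hN : 0 ≤ N)
    (hD : 0 ≤ D) {n n' m₁ m₂ m₁' m₂' : ℝ} (hn : n ∈ Set.Icc N (2 * N))
    (hn' : n' ∈ Set.Icc N (2 * N)) (hm₁ : m₁ ∈ Set.Icc N (2 * N)) (hm₂ : m₂ ∈ Set.Icc N (2 * N))
    (hm₁' : m₁' ∈ Set.Icc N (2 * N)) (hm₂' : m₂' ∈ Set.Icc N (2 * N)) (h₂ : |m₂ - m₁| ≤ l)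
    (h₁' : |m₁' - m₁| ≤ l) (h₂' : |m₂' - m₁| ≤ l)
    (hside : (m₁ + D ≤ n ∧ m₁ + D ≤ n') ∨ (n + D ≤ m₁ ∧ n' + D ≤ m₁))
    (hsq : n ^ 2 + (m₁ ^ 2 + m₂ ^ 2) = n' ^ 2 + (m₁' ^ 2 + m₂' ^ 2))
    (hpow : |n ^ (j + 2) + (m₁ ^ (j + 2) + m₂ ^ (j + 2)) -
      (n' ^ (j + 2) + (m₁' ^ (j + 2) + m₂' ^ (j + 2)))| ≤ E) :
    N ^ j * (|n - n'| * D) ≤ E + 3 * ((j + 2) * j * (2 * N) ^ j * l ^ 2) := by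
  have hnear {t : ℝ} (ht : t ∈ Set.Icc N (2 * N)) (htl : |t - m₁| ≤ l) :
      0 ≤ tangentDefect j m₁ t ∧ tangentDefect j m₁ t ≤ (j + 2) * j * (2 * N) ^ j * l ^ 2 := by
    refine ⟨tangentDefect.nonneg j (hN.trans hm₁.1) (hN.trans ht.1),
      (tangentDefect.le_mul_sub_sq j (hN.trans hm₁.1) (hN.trans ht.1) hm₁.2 ht.2).trans ?_⟩
    rw [← sq_abs (t - m₁)]
    gcongr
  have hdefect : tangentDefect j m₁ n - tangentDefect j m₁ n' =
      (n ^ (j + 2) + (m₁ ^ (j + 2) + m₂ ^ (j + 2)) -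
        (n' ^ (j + 2) + (m₁' ^ (j + 2) + m₂' ^ (j + 2)))) -
      tangentDefect j m₁ m₂ + tangentDefect j m₁ m₁' + tangentDefect j m₁ m₂' := by
    unfold tangentDefect
    linear_combination -(((j : ℝ) + 2) / 2 * m₁ ^ j) * hsq
  calc N ^ j * (|n - n'| * D) = N ^ j * D * |n - n'| := by ring
    _ ≤ |tangentDefect j m₁ n - tangentDefect j m₁ n'| :=
        tangentDefect.pow_mul_le_abs_sub hj hN hm₁.1 hn'.1 hn.1 hD (hside.imp And.symm And.symm)
    _ ≤ E + 3 * ((j + 2) * j * (2 * N) ^ j * l ^ 2) := by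
        have b₂ := hnear hm₂ h₂
        have b₁' := hnear hm₁' h₁'
        have b₂' := hnear hm₂' h₂'
        rw [hdefect]
        rw [abs_le] at hpow ⊢
        constructor <;> linarith

lemma abs_sub_le_of_mem_arc {S : Finset ℤ} {a l : ℝ} {m n : ℤ} (hm : m ∈ arc S a l)
    (hn : n ∈ arc S a l) : |(m - n : ℝ)| ≤ l := by
  rw [mem_arc] at hm hn
  rw [abs_le]
  constructor <;> linarith

lemma cast_mem_Icc_of_mem_Icc {N : ℕ} {n : ℤ} (hn : n ∈ Icc (N : ℤ) (2 * N)) :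
    (n : ℝ) ∈ Set.Icc (N : ℝ) (2 * N) := by
  rw [mem_Icc] at hn
  exact ⟨by exact_mod_cast hn.1, by exact_mod_cast hn.2⟩

lemma abs_sum_pow_sub_le_of_sum_curve_eq {k N s : ℕ} (hN : N ≠ 0) {x y : Fin s → ℤ}
    (h : ∑ i, curve k N (x i) = ∑ i, curve k N (y i)) :
    |∑ i, x i ^ k - ∑ i, y i ^ k| ≤ s * (N : ℤ) ^ (k - 1) := by
  have hfloor := congrArg Prod.snd h
  simp only [Prod.snd_sum, curve] at hfloor
  simpa [hfloor] using abs_sum_sub_sum_sub_mul_ediv_le univ (P := (N : ℤ) ^ (k - 1))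
    (by positivity) (fun i => x i ^ k) fun i => y i ^ k

lemma transversal_curve {j : ℕ} (hj : j ≠ 0) {N : ℕ} (hN : N ≠ 0) :
    Transversal (curve (j + 2) N) (Icc (N : ℤ) (2 * N)) √N (3 + 3 * ((j + 2) * j * 2 ^ j)) := by
  intro a l D hl hD n hn n' hn' hside m₁ hm₁ m₂ hm₂ m₁' hm₁' m₂' hm₂' h
  have hcurve : ∑ i, curve (j + 2) N (![n, m₁, m₂] i) =
      ∑ i, curve (j + 2) N (![n', m₁', m₂'] i) := by
    simpa [Fin.sum_univ_three, add_assoc] using h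
  have hpow := abs_sum_pow_sub_le_of_sum_curve_eq hN hcurve
  have hsq := congrArg Prod.fst h
  have hl2 : (N : ℝ) ≤ l ^ 2 := (Real.sqrt_le_left ((Real.sqrt_nonneg _).trans hl)).1 hl
  have hmem {m : ℤ} (hm : m ∈ arc (Icc (N : ℤ) (2 * N)) a l) :=
    cast_mem_Icc_of_mem_Icc (mem_arc.1 hm).1
  have key := pow_mul_abs_sub_mul_le_of_sq_add_eq hj (E := 3 * N ^ (j + 1)) N.cast_nonneg hD.le
    (cast_mem_Icc_of_mem_Icc hn) (cast_mem_Icc_of_mem_Icc hn') (hmem hm₁) (hmem hm₂) (hmem hm₁')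
    (hmem hm₂') (abs_sub_le_of_mem_arc hm₂ hm₁) (abs_sub_le_of_mem_arc hm₁' hm₁)
    (abs_sub_le_of_mem_arc hm₂' hm₁) ?_ (by exact_mod_cast hsq) ?_
  · refine le_of_mul_le_mul_left (a := (N : ℝ) ^ j) (key.trans ?_) (by positivity)
    calc _ ≤ 3 * ((N : ℝ) ^ j * l ^ 2) + 3 * ((j + 2) * j * (2 * N) ^ j * l ^ 2) := by
          rw [pow_succ]
          gcongr
      _ = _ := by
          rw [mul_pow]
          ring
  · rw [mem_arc] at hm₁
    refine hside.imp (fun h => ?_) fun h => ?_ <;> constructor <;> linarith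
  · simp only [Fin.sum_univ_three, Matrix.cons_val] at hpow
    rw [add_assoc, add_assoc] at hpow
    exact_mod_cast hpow

end Curve

section ShortArcs

open Finset

lemma card_arc_le (S : Finset ℤ) (a : ℝ) {l : ℝ} (hl : 0 ≤ l) : (#(arc S a l) : ℝ) ≤ l + 1 := by
  have hsub : arc S a l ⊆ Ico ⌈a⌉ ⌈a + l⌉ := fun n hn =>
    mem_Ico.2 ⟨Int.ceil_le.2 (mem_arc.1 hn).2.1, Int.lt_ceil.2 (mem_arc.1 hn).2.2⟩
  calc (#(arc S a l) : ℝ) ≤ #(Ico ⌈a⌉ ⌈a + l⌉) := by exact_mod_cast card_le_card hsub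
    _ = (⌈a + l⌉ - ⌈a⌉ : ℝ) := by
        exact_mod_cast Int.card_Ico_of_le _ _ (Int.ceil_le_ceil (le_add_of_nonneg_right hl))
    _ ≤ l + 1 := by linarith [Int.ceil_lt_add_one (a + l), Int.le_ceil a]

lemma two_mul_mul_abs_sum_sub_sum_le {ι : Type*} (s : Finset ι) {x y : ι → ℝ} {c l : ℝ}
    (hc : 0 ≤ c) (hx : ∀ i ∈ s, |x i - c| ≤ l) (hy : ∀ i ∈ s, |y i - c| ≤ l)
    (hsq : ∑ i ∈ s, x i ^ 2 = ∑ i ∈ s, y i ^ 2) :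
    2 * c * |∑ i ∈ s, x i - ∑ i ∈ s, y i| ≤ #s * l ^ 2 := by
  have hbound {z : ι → ℝ} (hz : ∀ i ∈ s, |z i - c| ≤ l) :
      0 ≤ ∑ i ∈ s, (z i - c) ^ 2 ∧ ∑ i ∈ s, (z i - c) ^ 2 ≤ #s * l ^ 2 := by
    refine ⟨sum_nonneg fun i _ => sq_nonneg _, ?_⟩
    rw [← nsmul_eq_mul]
    refine sum_le_card_nsmul _ _ _ fun i hi => ?_
    exact sq_le_sq' (abs_le.1 (hz i hi)).1 (abs_le.1 (hz i hi)).2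
  have hexpand : 2 * c * (∑ i ∈ s, x i - ∑ i ∈ s, y i) =
      ∑ i ∈ s, (y i - c) ^ 2 - ∑ i ∈ s, (x i - c) ^ 2 := by
    simp only [sub_sq, sum_add_distrib, sum_sub_distrib, hsq, ← sum_mul, ← mul_sum]
    ring
  rw [← abs_of_nonneg (mul_nonneg zero_le_two hc), ← abs_mul, hexpand, abs_le]
  constructor <;> linarith [hbound hx, hbound hy]

lemma higherEnergy_curve_le (k N s : ℕ) {M : ℕ} {A : Finset ℤ} {c l : ℝ} (hc : 0 < c)
    (hA : ∀ n ∈ A, |n - c| ≤ l) (hM : s * l ^ 2 ≤ 2 * c * M) :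
    higherEnergy s (curve k N) A ≤ higherEnergy s (fun n : ℤ => (n, n ^ 2)) A * (2 * M + 1) := by
  calc higherEnergy s (curve k N) A
      ≤ #{p ∈ (Fintype.piFinset fun _ : Fin s => A) ×ˢ (Fintype.piFinset fun _ : Fin s => A) |
          ∑ i, (p.1 i, p.1 i ^ 2) - ∑ i, (p.2 i, p.2 i ^ 2) ∈ Icc (-(M : ℤ)) M ×ˢ {0}} := by
        refine card_le_card (monotone_filter_right _ fun p hp hcurve => ?_)
        simp only [mem_product, Fintype.mem_piFinset] at hp
        have hsq : ∑ i, p.1 i ^ 2 = ∑ i, p.2 i ^ 2 := by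
          simpa only [Prod.fst_sum, curve] using congrArg Prod.fst hcurve
        have hsum := two_mul_mul_abs_sum_sub_sum_le univ (x := fun i => (p.1 i : ℝ))
          (y := fun i => (p.2 i : ℝ)) hc.le (fun i _ => hA _ (hp.1 i)) (fun i _ => hA _ (hp.2 i))
          (by exact_mod_cast hsq)
        rw [card_univ, Fintype.card_fin] at hsum
        have habs := le_of_mul_le_mul_left (hsum.trans hM) (by positivity)
        simp only [mem_product, Prod.fst_sub, Prod.snd_sub, Prod.fst_sum, Prod.snd_sum, hsq,
          sub_self, mem_singleton, and_true, mem_Icc]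
        exact abs_le.1 (by exact_mod_cast habs)
    _ ≤ higherEnergy s (fun n : ℤ => (n, n ^ 2)) A * #(Icc (-(M : ℤ)) M ×ˢ {(0 : ℤ)}) :=
        card_sum_sub_sum_mem_le s (fun n : ℤ => (n, n ^ 2)) A _
    _ = higherEnergy s (fun n : ℤ => (n, n ^ 2)) A * (2 * M + 1) := by
        rw [card_product, card_singleton, mul_one, Int.card_Icc]
        congr 1
        lia

lemma exists_higherEnergy_parabola_le_rpow {ε : ℝ} (hε : 0 < ε) : ∃ K : ℝ, 0 < K ∧
    ∀ (N : ℕ) (A : Finset ℤ), N ≠ 0 → (∀ m ∈ A, ∀ n ∈ A, |m - n| ≤ N) →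
      (higherEnergy 3 (fun n : ℤ => (n, n ^ 2)) A : ℝ) ≤ K * (N : ℝ) ^ ε * #A ^ 3 := by
  obtain ⟨K, hK, hdiv⟩ := exists_card_divisors_le_rpow (half_pos hε)
  refine ⟨4 + 2 * K, by positivity, fun N A hN hA => ?_⟩
  have hN1 : (1 : ℝ) ≤ N := by exact_mod_cast Nat.one_le_iff_ne_zero.2 hN
  have hM : ∀ a ∈ A, ∀ b ∈ A, ∀ c ∈ A,
      #((a - c) * (b - c)).natAbs.divisors ≤ ⌊K * (N : ℝ) ^ ε⌋₊ := by
    intro a ha b hb c hc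
    rcases eq_or_ne ((a - c) * (b - c)).natAbs 0 with h0 | h0
    · simp [h0]
    have hle : ((a - c) * (b - c)).natAbs ≤ N ^ 2 := by
      zify
      rw [abs_mul, sq]
      exact mul_le_mul (hA a ha c hc) (hA b hb c hc) (abs_nonneg _) (by positivity)
    refine Nat.le_floor ((hdiv _ h0).trans ?_)
    calc K * (((a - c) * (b - c)).natAbs : ℝ) ^ (ε / 2) ≤ K * ((N : ℝ) ^ 2) ^ (ε / 2) := by
          gcongr
          exact_mod_cast hle
      _ = K * (N : ℝ) ^ ε := by
          rw [← Real.rpow_natCast_mul N.cast_nonneg]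
          norm_num [mul_div_cancel₀]
  calc (higherEnergy 3 (fun n : ℤ => (n, n ^ 2)) A : ℝ)
      ≤ (4 + 2 * ⌊K * (N : ℝ) ^ ε⌋₊) * #A ^ 3 := by
        exact_mod_cast higherEnergy_parabola_le A hM
    _ ≤ (4 * (N : ℝ) ^ ε + 2 * (K * (N : ℝ) ^ ε)) * #A ^ 3 := by
        gcongr
        · exact le_mul_of_one_le_right (by norm_num) (Real.one_le_rpow hN1 hε.le)
        · exact Nat.floor_le (by positivity)
    _ = (4 + 2 * K) * (N : ℝ) ^ ε * #A ^ 3 := by ring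

lemma exists_higherEnergy_curve_arc_le (T : ℝ) {ε : ℝ} (hε : 0 < ε) : ∃ K : ℝ, 0 < K ∧
    ∀ (k N : ℕ) (a l : ℝ), N ≠ 0 → 1 ≤ l → l ≤ T * √N →
      (higherEnergy 3 (curve k N) (arc (Icc (N : ℤ) (2 * N)) a l) : ℝ) ≤
        K * (N : ℝ) ^ ε * l ^ 3 := by
  obtain ⟨K, hK, hparabola⟩ := exists_higherEnergy_parabola_le_rpow hε
  refine ⟨8 * K * (2 * ⌈3 * T ^ 2⌉₊ + 1), by positivity, fun k N a l hN hl1 hl => ?_⟩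
  set A := arc (Icc (N : ℤ) (2 * N)) a l
  have hN0 : (0 : ℝ) < N := by exact_mod_cast Nat.pos_of_ne_zero hN
  have hA (n : ℤ) (hn : n ∈ A) : |n - max a N| ≤ l := by
    have hnN := (cast_mem_Icc_of_mem_Icc (mem_arc.1 hn).1).1
    rw [mem_arc] at hn
    rw [abs_of_nonneg (sub_nonneg.2 (max_le hn.2.1 hnN))]
    linarith [le_max_left a N]
  have hM : (3 : ℕ) * l ^ 2 ≤ 2 * max a N * ⌈3 * T ^ 2⌉₊ := by
    calc ((3 : ℕ) : ℝ) * l ^ 2 ≤ 3 * (T * √N) ^ 2 := by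
          push_cast
          gcongr
      _ = 1 * N * (3 * T ^ 2) := by
          rw [mul_pow, Real.sq_sqrt hN0.le]
          ring
      _ ≤ 2 * max a N * ⌈3 * T ^ 2⌉₊ := by
          gcongr
          · norm_num
          · exact le_max_right _ _
          · exact Nat.le_ceil _
  have hdiam : ∀ m ∈ A, ∀ n ∈ A, |m - n| ≤ (N : ℤ) := by
    intro m hm n hn
    have hm' := mem_Icc.1 (mem_arc.1 hm).1
    have hn' := mem_Icc.1 (mem_arc.1 hn).1
    rw [abs_le]
    lia
  have hcard : (#A : ℝ) ≤ 2 * l := (card_arc_le _ a (zero_le_one.trans hl1)).trans (by linarith)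
  calc (higherEnergy 3 (curve k N) A : ℝ)
      ≤ higherEnergy 3 (fun n : ℤ => (n, n ^ 2)) A * (2 * ⌈3 * T ^ 2⌉₊ + 1) := by
        exact_mod_cast higherEnergy_curve_le k N 3 (lt_max_of_lt_right hN0) hA hM
    _ ≤ K * (N : ℝ) ^ ε * (2 * l) ^ 3 * (2 * ⌈3 * T ^ 2⌉₊ + 1) := by
        gcongr
        refine (hparabola N A hN hdiam).trans ?_
        gcongr
    _ = 8 * K * (2 * ⌈3 * T ^ 2⌉₊ + 1) * (N : ℝ) ^ ε * l ^ 3 := by ring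

end ShortArcs

section Dyadic

open Finset

lemma exists_higherEnergy_curve_le {k : ℕ} (hk : 3 ≤ k) {ε : ℝ} (hε : 0 < ε) :
    ∃ K : ℝ, 0 < K ∧ ∀ N : ℕ, N ≠ 0 →
      (higherEnergy 3 (curve k N) (Icc (N : ℤ) (2 * N)) : ℝ) ≤ K * (N : ℝ) ^ (3 + ε) := by
  obtain ⟨j, rfl⟩ : ∃ j, k = j + 2 := ⟨k - 2, by lia⟩
  obtain ⟨T, hextends⟩ :=
    exists_higherEnergy_arc_bound_extends (3 + 3 * ((j + 2) * j * 2 ^ j)) (half_pos hε)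
  obtain ⟨K, hK, hshort⟩ := exists_higherEnergy_curve_arc_le T (half_pos hε)
  refine ⟨K * (2 ^ (ε / 2) * 2 ^ 3), by positivity, fun N hN => ?_⟩
  have hN1 : (1 : ℝ) ≤ N := by exact_mod_cast Nat.one_le_iff_ne_zero.2 hN
  have hN0 : (0 : ℝ) < N := zero_lt_one.trans_le hN1
  have hsqrt : 1 ≤ √(N : ℝ) := Real.one_le_sqrt.2 hN1
  have harc : arc (Icc (N : ℤ) (2 * N)) N (N + 1) = Icc (N : ℤ) (2 * N) := by
    refine filter_true_of_mem fun n hn => ?_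
    have hn' := cast_mem_Icc_of_mem_Icc hn
    exact ⟨hn'.1, by linarith [hn'.2]⟩
  have hbase (a l : ℝ) (hl : √N ≤ l) (hlT : l ≤ T * √N) :
      (higherEnergy 3 (curve (j + 2) N) (arc (Icc (N : ℤ) (2 * N)) a l) : ℝ) ≤
        K * (N : ℝ) ^ (ε / 2) * l ^ (ε / 2) * l ^ 3 := by
    have hl1 : 1 ≤ l := hsqrt.trans hl
    refine (hshort _ N a l hN hl1 hlT).trans
      (mul_le_mul_of_nonneg_right (le_mul_of_one_le_right (by positivity) ?_) (by positivity))
    exact Real.one_le_rpow hl1 (half_pos hε).le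
  have hlong := hextends _ _ _ _ (by positivity) (by positivity) (transversal_curve (by lia) hN)
    hbase N (N + 1) (Real.sqrt_le_iff.2 ⟨by positivity, by nlinarith⟩)
  rw [harc] at hlong
  calc (higherEnergy 3 (curve (j + 2) N) (Icc (N : ℤ) (2 * N)) : ℝ)
      ≤ K * (N : ℝ) ^ (ε / 2) * ((N : ℝ) + 1) ^ (ε / 2) * ((N : ℝ) + 1) ^ 3 := hlong
    _ ≤ K * (N : ℝ) ^ (ε / 2) * (2 * N : ℝ) ^ (ε / 2) * (2 * N : ℝ) ^ 3 := by
        have : (N : ℝ) + 1 ≤ 2 * N := by linarith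
        gcongr
    _ = K * (2 ^ (ε / 2) * 2 ^ 3) *
          ((N : ℝ) ^ (3 : ℝ) * ((N : ℝ) ^ (ε / 2) * (N : ℝ) ^ (ε / 2))) := by
        rw [Real.mul_rpow zero_le_two hN0.le, mul_pow, ← Real.rpow_natCast (N : ℝ) 3]
        push_cast
        ring
    _ = K * (2 ^ (ε / 2) * 2 ^ 3) * (N : ℝ) ^ (3 + ε) := by
        rw [← Real.rpow_add hN0, ← Real.rpow_add hN0, add_halves]

lemma sum_curve_sub_sum_curve_mem {k N s : ℕ} (hN : N ≠ 0) {C : ℝ} {x y : Fin s → ℤ}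
    (hsq : ∑ i, x i ^ 2 = ∑ i, y i ^ 2)
    (hpow : ((|∑ i, x i ^ k - ∑ i, y i ^ k| : ℤ) : ℝ) ≤ C * (N : ℝ) ^ (k - 1)) :
    ∑ i, curve k N (x i) - ∑ i, curve k N (y i) ∈
      ({0} : Finset ℤ) ×ˢ Icc (-(⌈C + s⌉₊ : ℤ)) ⌈C + s⌉₊ := by
  set z := ∑ i, x i ^ k / (N : ℤ) ^ (k - 1) - ∑ i, y i ^ k / (N : ℤ) ^ (k - 1) with hz
  have hfloor := abs_sum_sub_sum_sub_mul_ediv_le univ (P := (N : ℤ) ^ (k - 1)) (by positivity)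
    (fun i => x i ^ k) fun i => y i ^ k
  rw [← hz, card_univ, Fintype.card_fin] at hfloor
  have hmul : (N : ℝ) ^ (k - 1) * |(z : ℝ)| ≤ (N : ℝ) ^ (k - 1) * (C + s) := by
    rify at hfloor hpow
    rw [← abs_of_nonneg (pow_nonneg N.cast_nonneg (k - 1) : (0 : ℝ) ≤ N ^ (k - 1)), ← abs_mul,
      abs_of_nonneg (by positivity : (0 : ℝ) ≤ N ^ (k - 1))]
    rw [abs_le] at *
    constructor <;> linarith
  have habs := (le_of_mul_le_mul_left hmul (by positivity)).trans (Nat.le_ceil _)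
  simp only [mem_product, curve, Prod.fst_sub, Prod.snd_sub, Prod.fst_sum, Prod.snd_sum, hsq,
    sub_self, mem_singleton, true_and, mem_Icc, ← hz]
  exact abs_le.1 (by exact_mod_cast habs)

lemma card_near_solutions_le (k : ℕ) {N : ℕ} (hN : N ≠ 0) (C : ℝ) :
    Nat.card {t : Fin 6 → ℤ //
        (∀ i, (N : ℤ) ≤ t i ∧ t i ≤ 2 * N) ∧
        t 0 ^ 2 + t 1 ^ 2 + t 2 ^ 2 = t 3 ^ 2 + t 4 ^ 2 + t 5 ^ 2 ∧
        ((|t 0 ^ k + t 1 ^ k + t 2 ^ k - t 3 ^ k - t 4 ^ k - t 5 ^ k| : ℤ) : ℝ) ≤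
          C * (N : ℝ) ^ (k - 1)} ≤
      higherEnergy 3 (curve k N) (Icc (N : ℤ) (2 * N)) * (2 * ⌈C + 3⌉₊ + 1) := by
  set H : Finset (ℤ × ℤ) := {0} ×ˢ Icc (-(⌈C + 3⌉₊ : ℤ)) ⌈C + 3⌉₊ with hH
  set W : Finset ((Fin 3 → ℤ) × (Fin 3 → ℤ)) :=
    {p ∈ (Fintype.piFinset fun _ => Icc (N : ℤ) (2 * N)) ×ˢ
        (Fintype.piFinset fun _ => Icc (N : ℤ) (2 * N)) |
      ∑ i, curve k N (p.1 i) - ∑ i, curve k N (p.2 i) ∈ H}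
  have hcardH : #H = 2 * ⌈C + 3⌉₊ + 1 := by
    rw [hH, card_product, card_singleton, one_mul, Int.card_Icc]
    lia
  rw [← hcardH]
  refine le_trans ?_ (card_sum_sub_sum_mem_le 3 (curve k N) (Icc (N : ℤ) (2 * N)) H)
  rw [← Nat.card_eq_finsetCard]
  refine Nat.card_le_card_of_injective
    (fun t => ⟨(![t.1 0, t.1 1, t.1 2], ![t.1 3, t.1 4, t.1 5]), ?_⟩) fun t u htu => ?_
  · obtain ⟨t, ht, hsq, hpow⟩ := t
    refine mem_filter.2 ⟨?_, sum_curve_sub_sum_curve_mem hN ?_ ?_⟩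
    · simp [Fin.forall_fin_succ, ht]
    · simpa [Fin.sum_univ_three] using hsq
    · simpa [Fin.sum_univ_three, sub_sub, add_assoc] using hpow
  · simp only [Subtype.mk.injEq, Prod.mk.injEq, Matrix.vecCons_inj] at htu
    ext i
    fin_cases i <;> simp_all

end Dyadic

theorem diophantine_count_squares_kth_powers_general (k : ℕ) (hk : 3 ≤ k) (C : ℝ) :
    ∀ ε > (0 : ℝ), ∃ Cε > (0 : ℝ), ∀ N : ℕ, 1 ≤ N →
      (Nat.card {t : Fin 6 → ℤ //
          (∀ i, (N : ℤ) ≤ t i ∧ t i ≤ 2 * N) ∧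
          t 0 ^ 2 + t 1 ^ 2 + t 2 ^ 2 = t 3 ^ 2 + t 4 ^ 2 + t 5 ^ 2 ∧
          ((|t 0 ^ k + t 1 ^ k + t 2 ^ k - t 3 ^ k - t 4 ^ k - t 5 ^ k| : ℤ) : ℝ) ≤
            C * (N : ℝ) ^ (k - 1)} : ℝ) ≤
        Cε * (N : ℝ) ^ ((3 : ℝ) + ε) := by
  intro ε hε
  obtain ⟨K, hK, henergy⟩ := exists_higherEnergy_curve_le hk hε
  refine ⟨K * (2 * ⌈C + 3⌉₊ + 1), by positivity, fun N hN => ?_⟩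
  have hN0 : N ≠ 0 := Nat.one_le_iff_ne_zero.1 hN
  calc _ ≤ (higherEnergy 3 (curve k N) (Finset.Icc (N : ℤ) (2 * N)) : ℝ) * (2 * ⌈C + 3⌉₊ + 1) := by
        exact_mod_cast card_near_solutions_le k hN0 C
    _ ≤ K * (N : ℝ) ^ (3 + ε) * (2 * ⌈C + 3⌉₊ + 1) := by
        gcongr
        exact henergy N hN0
    _ = K * (2 * ⌈C + 3⌉₊ + 1) * (N : ℝ) ^ (3 + ε) := by ring

theorem diophantine_count_squares_kth_powers (k : ℕ) (hk : 4 ≤ k) (C : ℝ) (hC : 0 < C) :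
    ∀ ε > (0 : ℝ), ∃ Cε > (0 : ℝ), ∀ N : ℕ, 1 ≤ N →
      (Nat.card {t : Fin 6 → ℤ //
          (∀ i, (N : ℤ) ≤ t i ∧ t i ≤ 2 * N) ∧
          t 0 ^ 2 + t 1 ^ 2 + t 2 ^ 2 = t 3 ^ 2 + t 4 ^ 2 + t 5 ^ 2 ∧
          ((|t 0 ^ k + t 1 ^ k + t 2 ^ k - t 3 ^ k - t 4 ^ k - t 5 ^ k| : ℤ) : ℝ) ≤
            C * (N : ℝ) ^ (k - 1)} : ℝ) ≤
        Cε * (N : ℝ) ^ ((3 : ℝ) + ε) :=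
  diophantine_count_squares_kth_powers_general k (by lia) C

end
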